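/- arXiv:math/0205140 — 2 statements merged into one kernel-verified Lean document; each statement's English description precedes it below -/
import Mathlib

section
/- Let d ≥ 3. Let X₁, X₂, … and Y₁, Y₂, … be two sequences of random points, all independent and uniformly distributed in the unit cube [0,1]^d, and let L_N = L_MBM(X₁,…,X_N; Y₁,…,Y_N) be the length of a minimum Euclidean bipartite matching of the first N points of each sequence. Then there exists a constant β_MBM(d) > 0 such that, with probability one, L_N / N^{1-1/d} → β_MBM(d) as N → ∞. -/
open MeasureTheory ProbabilityTheory Filter

noncomputable section

/-- The unit cube `[0,1]^d` in Euclidean space `ℝ^d`. -/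
def unitCube (d : ℕ) : Set (EuclideanSpace ℝ (Fin d)) :=
  {x | ∀ i, x i ∈ Set.Icc (0 : ℝ) 1}

/-- The uniform probability measure on the unit cube `[0,1]^d`
(the cube has Lebesgue measure one, so the restriction of Lebesgue measure
to the cube is the uniform probability measure on it). -/
def unifCube (d : ℕ) : Measure (EuclideanSpace ℝ (Fin d)) :=
  volume.restrict (unitCube d)

/-- `LMBMon X Y A B` is the minimum total Euclidean length of a partial bipartite
matching pairing `min A.card B.card` of the points `X j, j ∈ A` with as many of the
points `Y j, j ∈ B`, each pair consisting of one `X`-point and one `Y`-point. -/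
def LMBMon {d N₁ N₂ : ℕ} (X : Fin N₁ → EuclideanSpace ℝ (Fin d))
    (Y : Fin N₂ → EuclideanSpace ℝ (Fin d)) (A : Finset (Fin N₁)) (B : Finset (Fin N₂)) : ℝ :=
  sInf { s | ∃ (σ : Fin (min A.card B.card) ↪ Fin N₁) (τ : Fin (min A.card B.card) ↪ Fin N₂),
    (∀ i, σ i ∈ A) ∧ (∀ i, τ i ∈ B) ∧ s = ∑ i, dist (X (σ i)) (Y (τ i)) }

/-- `LMBM X Y` : the minimum total Euclidean length of a bipartite matching between the
points of `X` and the points of `Y`; if the two families have different cardinalities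
`N₁ ≠ N₂`, it is the minimum length of a partial matching pairing `min N₁ N₂` points of
each family, leaving `|N₁ - N₂|` points unmatched. -/
def LMBM {d N₁ N₂ : ℕ} (X : Fin N₁ → EuclideanSpace ℝ (Fin d))
    (Y : Fin N₂ → EuclideanSpace ℝ (Fin d)) : ℝ :=
  LMBMon X Y Finset.univ Finset.univ

/-- `MP d lam`: the expected length of a minimum bipartite matching in the Poissonized
model on `[0,1]^d` with intensity `lam`: the numbers `n₁, n₂` of points of the two
families are independent Poisson(lam) variables and the points are i.i.d. uniform
on the cube. -/
def MP (d : ℕ) (lam : ℝ) : ℝ :=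
  ∑' n₁ : ℕ, ∑' n₂ : ℕ,
    (Real.exp (-lam) * lam ^ n₁ / n₁.factorial) *
      ((Real.exp (-lam) * lam ^ n₂ / n₂.factorial) *
        ∫ p : (Fin n₁ → EuclideanSpace ℝ (Fin d)) × (Fin n₂ → EuclideanSpace ℝ (Fin d)),
          LMBM p.1 p.2 ∂ ((Measure.pi fun _ => unifCube d).prod (Measure.pi fun _ => unifCube d)))

end

/-! Changing one point changes the minimum cost by at most a constant, so McDiarmid's inequality, in
the form of a sub-Gaussian moment generating function, and the Borel–Cantelli lemma show that the
cost fluctuates around its mean by `o(n ^ α)` for every `α > 1 / 2`. In dimension `d ≥ 3` the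
exponent `1 - 1 / d` is of this kind, and only the mean `u n` remains to be treated.

Concatenating matchings makes `u` subadditive. Cut the cube into `m ^ d` subcubes of side `1 / m`.
Each subcube receives about its fair share of the points, up to an expected imbalance of order the
square root of that share, and matching within the subcubes gives
`u (m ^ d * n) ≤ m ^ (d - 1) * u n + C * m ^ d * √n`. Since `1 / 2 < 1 - 1 / d`, the error is of
lower order, so `u n / n ^ (1 - 1 / d)` converges, as for an exactly homogeneous inequality.
The limit is positive because a point has on average at most `1 / 2` partners within a distance of
order `n ^ (-1 / d)`. -/

section Matching

/-- The minimum cost of a perfect matching between the families `x` and `y`, where matching the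
points `u` and `v` costs `c u v`. -/
noncomputable def minMatchingCost {S T ι : Type*} [Fintype ι] (c : S → T → ℝ)
    (x : ι → S) (y : ι → T) : ℝ :=
  ⨅ σ : Equiv.Perm ι, ∑ i, c (x i) (y (σ i))

variable {S T ι κ : Type*} [Fintype ι] [Fintype κ] {c : S → T → ℝ}

lemma minMatchingCost_le_sum (x : ι → S) (y : ι → T) (σ : Equiv.Perm ι) :
    minMatchingCost c x y ≤ ∑ i, c (x i) (y (σ i)) :=
  ciInf_le (Set.finite_range _).bddBelow σ

lemma exists_sum_eq_minMatchingCost (c : S → T → ℝ) (x : ι → S) (y : ι → T) :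
    ∃ σ : Equiv.Perm ι, ∑ i, c (x i) (y (σ i)) = minMatchingCost c x y :=
  exists_eq_ciInf_of_finite

lemma minMatchingCost_nonneg (hc : ∀ u v, 0 ≤ c u v) (x : ι → S) (y : ι → T) :
    0 ≤ minMatchingCost c x y :=
  le_ciInf fun _ => Finset.sum_nonneg fun _ _ => hc _ _

lemma minMatchingCost_le_mul_card {D : ℝ} (hD : ∀ u v, c u v ≤ D) (x : ι → S) (y : ι → T) :
    minMatchingCost c x y ≤ D * Fintype.card ι :=
  calc minMatchingCost c x y ≤ ∑ i, c (x i) (y i) := minMatchingCost_le_sum x y 1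
    _ ≤ ∑ _i : ι, D := Finset.sum_le_sum fun _ _ => hD _ _
    _ = D * Fintype.card ι := by simp [mul_comm]

lemma minMatchingCost_comp_equiv_le (e e' : κ ≃ ι) (x : ι → S) (y : ι → T) :
    minMatchingCost c (x ∘ e) (y ∘ e') ≤ minMatchingCost c x y := by
  obtain ⟨σ, hσ⟩ := exists_sum_eq_minMatchingCost c x y
  calc minMatchingCost c (x ∘ e) (y ∘ e')
      ≤ ∑ k, c (x (e k)) (y (e' (e'.symm (σ (e k))))) :=
        minMatchingCost_le_sum _ _ ((e.trans σ).trans e'.symm)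
    _ = ∑ i, c (x i) (y (σ i)) := by
        simp only [Equiv.apply_symm_apply]
        exact e.sum_comp fun i => c (x i) (y (σ i))
    _ = minMatchingCost c x y := hσ

lemma minMatchingCost_comp_equiv (e e' : κ ≃ ι) (x : ι → S) (y : ι → T) :
    minMatchingCost c (x ∘ e) (y ∘ e') = minMatchingCost c x y := by
  refine le_antisymm (minMatchingCost_comp_equiv_le e e' x y) ?_
  simpa [Function.comp_assoc] using
    minMatchingCost_comp_equiv_le (c := c) e.symm e'.symm (x ∘ e) (y ∘ e')

lemma minMatchingCost_prod_le (x : κ × ι → S) (y : κ × ι → T) :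
    minMatchingCost c x y ≤
      ∑ k, minMatchingCost c (fun i => x (k, i)) (fun i => y (k, i)) := by
  choose σ hσ using fun k =>
    exists_sum_eq_minMatchingCost c (fun i => x (k, i)) (fun i => y (k, i))
  calc minMatchingCost c x y ≤ ∑ p : κ × ι, c (x p) (y (p.1, σ p.1 p.2)) :=
        minMatchingCost_le_sum _ _ (Equiv.prodCongrRight σ)
    _ = ∑ k, ∑ i, c (x (k, i)) (y (k, σ k i)) := Fintype.sum_prod_type _
    _ = _ := Finset.sum_congr rfl fun k _ => hσ k

lemma minMatchingCost_sum_le (x : κ ⊕ ι → S) (y : κ ⊕ ι → T) :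
    minMatchingCost c x y ≤ minMatchingCost c (x ∘ Sum.inl) (y ∘ Sum.inl) +
      minMatchingCost c (x ∘ Sum.inr) (y ∘ Sum.inr) := by
  obtain ⟨σ, hσ⟩ := exists_sum_eq_minMatchingCost c (x ∘ Sum.inl) (y ∘ Sum.inl)
  obtain ⟨τ, hτ⟩ := exists_sum_eq_minMatchingCost c (x ∘ Sum.inr) (y ∘ Sum.inr)
  rw [← hσ, ← hτ]
  exact (minMatchingCost_le_sum _ _ (Equiv.sumCongr σ τ)).trans (Fintype.sum_sum_type _).le

open Classical in
lemma minMatchingCost_le_add_mul_card_ne {D : ℝ} (h0 : ∀ u v, 0 ≤ c u v) (hD : ∀ u v, c u v ≤ D)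
    (x x' : ι → S) (y y' : ι → T) :
    minMatchingCost c x y ≤ minMatchingCost c x' y' +
      D * ((Finset.univ.filter fun i => x i ≠ x' i).card
        + (Finset.univ.filter fun i => y i ≠ y' i).card) := by
  obtain ⟨σ, hσ⟩ := exists_sum_eq_minMatchingCost c x' y'
  have cost_le (i : ι) : c (x i) (y (σ i)) ≤ c (x' i) (y' (σ i)) +
      D * ((if x i ≠ x' i then 1 else 0) + if y (σ i) ≠ y' (σ i) then 1 else 0) := by
    have h' := h0 (x' i) (y' (σ i))
    have hle := hD (x i) (y (σ i))
    have hD0 := (h0 (x i) (y (σ i))).trans hle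
    by_cases hx : x i = x' i <;> by_cases hy : y (σ i) = y' (σ i) <;> simp [hx, hy] at * <;>
      linarith
  calc minMatchingCost c x y ≤ ∑ i, c (x i) (y (σ i)) := minMatchingCost_le_sum x y σ
    _ ≤ ∑ i, (c (x' i) (y' (σ i)) +
          D * ((if x i ≠ x' i then 1 else 0) + if y (σ i) ≠ y' (σ i) then 1 else 0)) :=
        Finset.sum_le_sum fun i _ => cost_le i
    _ = _ := by
        rw [Finset.sum_add_distrib, hσ, ← Finset.mul_sum, Finset.sum_add_distrib,
          Equiv.sum_comp σ fun i => if y i ≠ y' i then (1 : ℝ) else 0,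
          Finset.sum_boole, Finset.sum_boole]

lemma minMatchingCost_comp_le_mul {S' T' : Type*} {c' : S' → T' → ℝ} {r : ℝ} {f : S → S'}
    {g : T → T'} (h : ∀ u v, c' (f u) (g v) ≤ r * c u v) (x : ι → S) (y : ι → T) :
    minMatchingCost c' (f ∘ x) (g ∘ y) ≤ r * minMatchingCost c x y := by
  obtain ⟨σ, hσ⟩ := exists_sum_eq_minMatchingCost c x y
  rw [← hσ, Finset.mul_sum]
  exact (minMatchingCost_le_sum _ _ σ).trans (Finset.sum_le_sum fun i _ => h _ _)

lemma measurable_minMatchingCost [MeasurableSpace S] [MeasurableSpace T] {α : Type*}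
    [MeasurableSpace α] (hc : Measurable fun p : S × T => c p.1 p.2) {x : α → ι → S}
    {y : α → ι → T} (hx : Measurable x) (hy : Measurable y) :
    Measurable fun a => minMatchingCost c (x a) (y a) :=
  Measurable.iInf fun σ => Finset.measurable_sum _ fun i _ =>
    hc.comp (((measurable_pi_apply i).comp hx).prodMk ((measurable_pi_apply (σ i)).comp hy))

open Classical in
/-- A pair `(i, j)` closer than `r` spoils at most one pair of any matching. -/
lemma mul_card_sub_card_lt_le_minMatchingCost (hc : ∀ u v, 0 ≤ c u v) {r : ℝ} (hr : 0 ≤ r)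
    (x : ι → S) (y : ι → T) :
    r * (Fintype.card ι - (Finset.univ.filter fun p : ι × ι => c (x p.1) (y p.2) < r).card) ≤
      minMatchingCost c x y := by
  refine le_ciInf fun σ => ?_
  set near := Finset.univ.filter fun i => c (x i) (y (σ i)) < r with hnear
  have card_near_le :
      near.card ≤ (Finset.univ.filter fun p : ι × ι => c (x p.1) (y p.2) < r).card :=
    Finset.card_le_card_of_injOn (fun i => (i, σ i)) (fun i hi => by simpa [hnear] using hi)
      fun i _ j _ hij => congrArg Prod.fst hij
  calc _ ≤ r * (Fintype.card ι - near.card) := by gcongr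
    _ = ∑ i, (r - if c (x i) (y (σ i)) < r then r else 0) := by
        simp [hnear, Finset.sum_ite, mul_sub, mul_comm]
    _ ≤ ∑ i, c (x i) (y (σ i)) := by
        refine Finset.sum_le_sum fun i _ => ?_
        split_ifs with h
        · simpa using hc _ _
        · simpa using h

lemma LMBM_eq_minMatchingCost {d N : ℕ} (X Y : Fin N → EuclideanSpace ℝ (Fin d)) :
    LMBM X Y = minMatchingCost dist X Y := by
  have hcard : min (Finset.univ : Finset (Fin N)).card (Finset.univ : Finset (Fin N)).card = N := by
    simp
  unfold LMBM LMBMon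
  generalize min (Finset.univ : Finset (Fin N)).card (Finset.univ : Finset (Fin N)).card = M
    at hcard
  subst hcard
  apply le_antisymm
  · obtain ⟨σ, hσ⟩ := exists_sum_eq_minMatchingCost dist X Y
    refine csInf_le ⟨0, ?_⟩
      ⟨Function.Embedding.refl _, σ.toEmbedding, by simp, by simp, hσ.symm⟩
    rintro s ⟨σ, τ, -, -, rfl⟩
    exact Finset.sum_nonneg fun _ _ => dist_nonneg
  · refine le_csInf
      ⟨_, Function.Embedding.refl _, Function.Embedding.refl _, by simp, by simp, rfl⟩ ?_
    rintro s ⟨σ, τ, -, -, rfl⟩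
    let e := Equiv.ofBijective σ (Finite.injective_iff_bijective.1 σ.injective)
    let f := Equiv.ofBijective τ (Finite.injective_iff_bijective.1 τ.injective)
    calc minMatchingCost dist X Y ≤ ∑ i, dist (X i) (Y (f (e.symm i))) :=
          minMatchingCost_le_sum _ _ (e.symm.trans f)
      _ = ∑ i, dist (X (σ i)) (Y (τ i)) := by
          rw [← e.sum_comp]
          simp [e, f]

end Matching

section McDiarmid

open scoped NNReal

/-- The bounded differences property of McDiarmid's inequality: changing only the coordinate `i`
changes the value of `f` by at most `D i`. -/
def HasBoundedDifferences {ι : Type*} {S : ι → Type*} (f : (∀ i, S i) → ℝ) (D : ι → ℝ≥0) : Prop :=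
  ∀ i x y, (∀ j, j ≠ i → x j = y j) → f x - f y ≤ D i

lemma HasBoundedDifferences.sub_le_sum {ι : Type*} [Fintype ι] {S : ι → Type*}
    {f : (∀ i, S i) → ℝ} {D : ι → ℝ≥0} (hf : HasBoundedDifferences f D) (x y : ∀ i, S i) :
    f x - f y ≤ ∑ i, D i := by
  classical
  suffices piecewise_sub_le : ∀ s : Finset ι, f (s.piecewise x y) - f y ≤ ∑ i ∈ s, D i by
    simpa using piecewise_sub_le Finset.univ
  intro s
  induction s using Finset.induction_on with
  | empty => simp
  | insert i s hi ih =>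
    have hdiff := hf i ((insert i s).piecewise x y) (s.piecewise x y) fun j hj => by
      simp [Finset.piecewise, hj]
    rw [Finset.sum_insert hi]
    push_cast at ih ⊢
    linarith

lemma HasBoundedDifferences.exists_abs_le {ι : Type*} [Finite ι] {S : ι → Type*}
    {f : (∀ i, S i) → ℝ} {D : ι → ℝ≥0} (hf : HasBoundedDifferences f D) :
    ∃ B, ∀ x, |f x| ≤ B := by
  have := Fintype.ofFinite ι
  rcases isEmpty_or_nonempty (∀ i, S i) with _ | ⟨⟨x₀⟩⟩
  · exact ⟨0, isEmptyElim⟩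
  · refine ⟨|f x₀| + ∑ i, (D i : ℝ), fun x => ?_⟩
    have hle := hf.sub_le_sum x x₀
    have hge := hf.sub_le_sum x₀ x
    push_cast at hle hge
    rcases abs_cases (f x) with h | h <;> rcases abs_cases (f x₀) with h' | h' <;> linarith

lemma integrable_of_measurable_of_abs_le {α : Type*} [MeasurableSpace α] {P : Measure α}
    [IsFiniteMeasure P] {f : α → ℝ} (hf : Measurable f) {B : ℝ} (hB : ∀ x, |f x| ≤ B) :
    Integrable f P :=
  Integrable.of_bound hf.aestronglyMeasurable B (Eventually.of_forall hB)

lemma integrable_exp_mul_of_abs_le {α : Type*} [MeasurableSpace α] {P : Measure α}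
    [IsFiniteMeasure P] {f : α → ℝ} (hf : Measurable f) {B : ℝ} (hB : ∀ x, |f x| ≤ B) (t : ℝ) :
    Integrable (fun x => Real.exp (t * f x)) P := by
  refine integrable_of_measurable_of_abs_le (B := Real.exp (|t| * B))
    (hf.const_mul t).exp fun x => ?_
  rw [Real.abs_exp, Real.exp_le_exp]
  calc t * f x ≤ |t * f x| := le_abs_self _
    _ = |t| * |f x| := abs_mul _ _
    _ ≤ |t| * B := by gcongr; exact hB x

lemma hasSubgaussianMGF_sub_integral_of_sub_le {α : Type*} [MeasurableSpace α] {μ : Measure α}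
    [IsProbabilityMeasure μ] {f : α → ℝ} {D : ℝ≥0} (hf : Measurable f)
    (hD : ∀ x y, f x - f y ≤ D) :
    HasSubgaussianMGF (fun x => f x - ∫ y, f y ∂μ) ((D / 2) ^ 2) μ := by
  obtain ⟨x₀⟩ := nonempty_of_isProbabilityMeasure μ
  have hbdd : BddBelow (Set.range f) :=
    ⟨f x₀ - D, by rintro _ ⟨x, rfl⟩; linarith [hD x₀ x]⟩
  have : Nonempty α := ⟨x₀⟩
  have hmem (x : α) : f x ∈ Set.Icc (⨅ y, f y) ((⨅ y, f y) + D) := by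
    refine ⟨ciInf_le hbdd x, ?_⟩
    rw [← sub_le_iff_le_add]
    exact le_ciInf fun y => by linarith [hD x y]
  simpa using hasSubgaussianMGF_of_mem_Icc hf.aemeasurable (Eventually.of_forall hmem)

lemma hasSubgaussianMGF_prod_of_integral {α β : Type*} [MeasurableSpace α] [MeasurableSpace β]
    {μ : Measure α} {ν : Measure β} [IsProbabilityMeasure μ] [IsProbabilityMeasure ν]
    {F : α × β → ℝ} {B : ℝ} {c D : ℝ≥0} (hF : Measurable F) (hB : ∀ p, |F p| ≤ B)
    (hD : ∀ s s' x, F (s, x) - F (s', x) ≤ D)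
    (hc : HasSubgaussianMGF
      (fun x => (∫ s, F (s, x) ∂μ) - ∫ y, (∫ s, F (s, y) ∂μ) ∂ν) c ν) :
    HasSubgaussianMGF (fun p => F p - ∫ q, F q ∂μ.prod ν) ((D / 2) ^ 2 + c) (μ.prod ν) := by
  rw [← integral_prod_symm F (integrable_of_measurable_of_abs_le hF hB)] at hc
  set m := ∫ p, F p ∂μ.prod ν
  have abs_sub_le (p : α × β) : |F p - m| ≤ B + |m| :=
    (abs_sub _ _).trans (by gcongr; exact hB p)
  have integrable_exp (t : ℝ) := integrable_exp_mul_of_abs_le (P := μ.prod ν)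
    (hF.sub_const m) abs_sub_le t
  refine ⟨integrable_exp, fun t => ?_⟩
  have conditional_mgf_le (x : β) : ∫ s, Real.exp (t * (F (s, x) - m)) ∂μ ≤
      Real.exp (((D / 2) ^ 2 : ℝ≥0) * t ^ 2 / 2) *
        Real.exp (t * ((∫ s, F (s, x) ∂μ) - m)) :=
    calc ∫ s, Real.exp (t * (F (s, x) - m)) ∂μ
        = (∫ s, Real.exp (t * (F (s, x) - ∫ s', F (s', x) ∂μ)) ∂μ) *
            Real.exp (t * ((∫ s, F (s, x) ∂μ) - m)) := by
          rw [← integral_mul_const]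
          refine integral_congr_ae (Eventually.of_forall fun s => ?_)
          simp only [← Real.exp_add]
          ring_nf
      _ ≤ _ := by
          gcongr
          exact (hasSubgaussianMGF_sub_integral_of_sub_le (hF.comp measurable_prodMk_right)
            fun s s' => hD s s' x).mgf_le t
  calc ∫ p, Real.exp (t * (F p - m)) ∂μ.prod ν
      = ∫ x, ∫ s, Real.exp (t * (F (s, x) - m)) ∂μ ∂ν := integral_prod_symm _ (integrable_exp t)
    _ ≤ ∫ x, Real.exp (((D / 2) ^ 2 : ℝ≥0) * t ^ 2 / 2) *
          Real.exp (t * ((∫ s, F (s, x) ∂μ) - m)) ∂ν :=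
        integral_mono_of_nonneg
          (Eventually.of_forall fun x => integral_nonneg fun s => (Real.exp_pos _).le)
          ((hc.integrable_exp_mul t).const_mul _) (Eventually.of_forall conditional_mgf_le)
    _ ≤ Real.exp (((D / 2) ^ 2 : ℝ≥0) * t ^ 2 / 2) * Real.exp (c * t ^ 2 / 2) := by
        rw [integral_const_mul]
        gcongr
        exact hc.mgf_le t
    _ = Real.exp (((D / 2) ^ 2 + c : ℝ≥0) * t ^ 2 / 2) := by
        rw [← Real.exp_add]
        push_cast
        ring_nf

section InsertNth

variable {n : ℕ} {S : Fin (n + 1) → Type*} [∀ i, MeasurableSpace (S i)]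
  {f : (∀ i, S i) → ℝ} {D : Fin (n + 1) → ℝ≥0}

lemma measurable_insertNth_prod (i : Fin (n + 1)) :
    Measurable fun p : S i × ∀ j, S (i.succAbove j) => (i.insertNth p.1 p.2 : ∀ i, S i) :=
  (MeasurableEquiv.piFinSuccAbove S i).symm.measurable

lemma HasBoundedDifferences.integral_insertNth (i : Fin (n + 1)) {μ : Measure (S i)}
    [IsProbabilityMeasure μ] (hf : Measurable f) (hD : HasBoundedDifferences f D) :
    HasBoundedDifferences (fun x : ∀ j, S (i.succAbove j) => ∫ s, f (i.insertNth s x) ∂μ)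
      fun j => D (i.succAbove j) := by
  obtain ⟨B, hB⟩ := hD.exists_abs_le
  have hint (x : ∀ j, S (i.succAbove j)) : Integrable (fun s => f (i.insertNth s x)) μ :=
    integrable_of_measurable_of_abs_le
      (hf.comp ((measurable_insertNth_prod i).comp measurable_prodMk_right)) fun s => hB _
  intro j x y hxy
  rw [← integral_sub (hint x) (hint y)]
  calc ∫ s, (f (i.insertNth s x) - f (i.insertNth s y)) ∂μ
      ≤ ∫ _s, (D (i.succAbove j) : ℝ) ∂μ := by
        refine integral_mono ((hint x).sub (hint y)) (integrable_const _) fun s =>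
          hD (i.succAbove j) _ _ ?_
        rw [Fin.forall_iff_succAbove i]
        refine ⟨by simp, fun k hk => ?_⟩
        simpa using hxy k fun h => hk (h ▸ rfl)
    _ = D (i.succAbove j) := by simp

lemma HasBoundedDifferences.hasSubgaussianMGF_of_integral_insertNth (i : Fin (n + 1))
    (μ : ∀ i, Measure (S i)) [∀ i, IsProbabilityMeasure (μ i)] {c : ℝ≥0}
    (hf : Measurable f) (hD : HasBoundedDifferences f D)
    (hc : HasSubgaussianMGF (fun x => (∫ s, f (i.insertNth s x) ∂μ i) -
        ∫ y, (∫ s, f (i.insertNth s y) ∂μ i) ∂Measure.pi fun j => μ (i.succAbove j)) c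
      (Measure.pi fun j => μ (i.succAbove j))) :
    HasSubgaussianMGF (fun x => f x - ∫ y, f y ∂Measure.pi μ) ((D i / 2) ^ 2 + c)
      (Measure.pi μ) := by
  obtain ⟨B, hB⟩ := hD.exists_abs_le
  set e := MeasurableEquiv.piFinSuccAbove S i
  have he := measurePreserving_piFinSuccAbove μ i
  have hprod := hasSubgaussianMGF_prod_of_integral (D := D i)
    (hf.comp (measurable_insertNth_prod i)) (fun p => hB _)
    (fun s s' x => hD i _ _ fun j hj => by
      obtain ⟨k, rfl⟩ := Fin.exists_succAbove_eq hj
      simp) hc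
  have integral_insertNth_prod : ∫ p : S i × ∀ j, S (i.succAbove j), f (i.insertNth p.1 p.2)
      ∂(μ i).prod (Measure.pi fun j => μ (i.succAbove j)) = ∫ y, f y ∂Measure.pi μ :=
    he.symm.integral_comp' f
  simp only [Function.comp_apply, integral_insertNth_prod] at hprod
  rw [← he.map_eq] at hprod
  refine (HasSubgaussianMGF.of_map e.measurable.aemeasurable hprod).congr
    (Eventually.of_forall fun x => ?_)
  simp [e]

end InsertNth

lemma HasBoundedDifferences.hasSubgaussianMGF_fin : ∀ {n : ℕ} {S : Fin n → Type*}
    [∀ i, MeasurableSpace (S i)] (μ : ∀ i, Measure (S i)) [∀ i, IsProbabilityMeasure (μ i)]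
    {f : (∀ i, S i) → ℝ} {D : Fin n → ℝ≥0}, Measurable f → HasBoundedDifferences f D →
    HasSubgaussianMGF (fun x => f x - ∫ y, f y ∂Measure.pi μ) (∑ i, (D i / 2) ^ 2) (Measure.pi μ)
  | 0, S, _, μ, _, f, D, _, _ => by
    have hconst : (fun x => f x - ∫ y, f y ∂Measure.pi μ) = fun _ => 0 := by
      funext x
      simp [Measure.pi_of_empty μ x, Subsingleton.elim _ x]
    rw [hconst]
    simp
  | n + 1, S, _, μ, _, f, D, hf, hD => by
    rw [Fin.sum_univ_succAbove _ 0]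
    exact hD.hasSubgaussianMGF_of_integral_insertNth 0 μ hf <|
      hasSubgaussianMGF_fin (fun j => μ (Fin.succAbove 0 j))
        ((hf.comp (measurable_insertNth_prod 0)).stronglyMeasurable.integral_prod_left').measurable
        (hD.integral_insertNth 0 hf)

theorem HasBoundedDifferences.hasSubgaussianMGF {ι : Type*} [Fintype ι] {S : ι → Type*}
    [∀ i, MeasurableSpace (S i)] (μ : ∀ i, Measure (S i)) [∀ i, IsProbabilityMeasure (μ i)]
    {f : (∀ i, S i) → ℝ} {D : ι → ℝ≥0} (hf : Measurable f) (hD : HasBoundedDifferences f D) :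
    HasSubgaussianMGF (fun x => f x - ∫ y, f y ∂Measure.pi μ) (∑ i, (D i / 2) ^ 2)
      (Measure.pi μ) := by
  set e := (Fintype.equivFin ι).symm
  have he := measurePreserving_piCongrLeft μ e
  have hfin := HasBoundedDifferences.hasSubgaussianMGF_fin (fun i => μ (e i))
    (f := fun x => f (MeasurableEquiv.piCongrLeft S e x)) (D := fun i => D (e i))
    (hf.comp (MeasurableEquiv.measurable _)) fun i x y hxy => hD (e i) _ _ fun j hj => by
      obtain ⟨k, rfl⟩ := e.surjective j
      simpa [MeasurableEquiv.coe_piCongrLeft] using hxy k fun h => hj (h ▸ rfl)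
  rw [he.integral_comp' f, Equiv.sum_comp e fun i => (D i / 2) ^ 2, ← he.symm.map_eq] at hfin
  convert HasSubgaussianMGF.of_map (MeasurableEquiv.measurable _).aemeasurable hfin using 2
  simp

end McDiarmid

section AlmostSure

open scoped NNReal

variable {Ω : Type*} [MeasurableSpace Ω] {P : Measure Ω}

lemma ae_tendsto_zero_of_summable_measureReal [IsFiniteMeasure P] {Z : ℕ → Ω → ℝ}
    (h : ∀ ε > 0, Summable fun N => P.real {ω | ε ≤ |Z N ω|}) :
    ∀ᵐ ω ∂P, Tendsto (Z · ω) atTop (nhds 0) := by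
  have eventually_lt (k : ℕ) : ∀ᵐ ω ∂P, ∀ᶠ N in atTop, ω ∉ {ω | 1 / ((k : ℝ) + 1) ≤ |Z N ω|} := by
    refine ae_eventually_notMem ?_
    simpa using (h _ Nat.one_div_pos_of_nat).tsum_ofReal_ne_top
  filter_upwards [ae_all_iff.2 eventually_lt] with ω hω
  rw [Metric.tendsto_nhds]
  intro ε hε
  obtain ⟨k, hk⟩ := exists_nat_one_div_lt hε
  filter_upwards [hω k] with N hN
  rw [Real.dist_0_eq_abs]
  exact (not_le.1 hN).trans hk

lemma measureReal_le_abs_of_hasSubgaussianMGF [IsFiniteMeasure P] {Z : Ω → ℝ} {c : ℝ≥0}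
    (hZ : HasSubgaussianMGF Z c P) {ε : ℝ} (hε : 0 ≤ ε) :
    P.real {ω | ε ≤ |Z ω|} ≤ 2 * Real.exp (-ε ^ 2 / (2 * c)) :=
  calc P.real {ω | ε ≤ |Z ω|} = P.real ({ω | ε ≤ Z ω} ∪ {ω | ε ≤ (-Z) ω}) := by
        simp only [le_abs, Set.ofPred_or, Pi.neg_apply]
    _ ≤ P.real {ω | ε ≤ Z ω} + P.real {ω | ε ≤ (-Z) ω} := measureReal_union_le _ _
    _ ≤ 2 * Real.exp (-ε ^ 2 / (2 * c)) := by
        linarith [hZ.measure_ge_le hε, hZ.neg.measure_ge_le hε]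

lemma summable_exp_neg_mul_rpow {κ s : ℝ} (hκ : 0 < κ) (hs : 0 < s) :
    Summable fun N : ℕ => Real.exp (-κ * (N : ℝ) ^ s) := by
  have exp_isLittleO :
      (fun N : ℕ => Real.exp (-κ * (N : ℝ) ^ s)) =o[atTop] fun N : ℕ => (N : ℝ) ^ (-2 : ℝ) := by
    have h := (isLittleO_exp_neg_mul_rpow_atTop hκ (-2 / s)).comp_tendsto
      ((tendsto_rpow_atTop hs).comp tendsto_natCast_atTop_atTop)
    refine h.congr (fun N => rfl) fun N => ?_
    simp only [Function.comp_apply]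
    rw [← Real.rpow_mul N.cast_nonneg, mul_div_cancel₀ _ hs.ne']
  exact summable_of_isBigO_nat (Real.summable_nat_rpow.2 (by norm_num)) exp_isLittleO.isBigO

theorem ae_tendsto_div_rpow_of_hasSubgaussianMGF [IsFiniteMeasure P] {Z : ℕ → Ω → ℝ} {c : ℝ≥0}
    (hc : 0 < c) (hZ : ∀ N : ℕ, HasSubgaussianMGF (Z N) (N * c) P) {α : ℝ} (hα : 1 / 2 < α) :
    ∀ᵐ ω ∂P, Tendsto (fun N => Z N ω / (N : ℝ) ^ α) atTop (nhds 0) := by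
  refine ae_tendsto_zero_of_summable_measureReal fun ε hε => ?_
  have hκ : 0 < ε ^ 2 / (2 * c) := by positivity
  refine Summable.of_norm_bounded_eventually_nat
    ((summable_exp_neg_mul_rpow hκ (s := 2 * α - 1) (by linarith)).mul_left 2) ?_
  filter_upwards [eventually_ge_atTop 1] with N hN
  have hN0 : (0 : ℝ) < N := by exact_mod_cast hN
  have hpos : 0 < (N : ℝ) ^ α := Real.rpow_pos_of_pos hN0 α
  rw [Real.norm_of_nonneg measureReal_nonneg]
  calc P.real {ω | ε ≤ |Z N ω / (N : ℝ) ^ α|} = P.real {ω | ε * (N : ℝ) ^ α ≤ |Z N ω|} := by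
        simp only [abs_div, abs_of_pos hpos, le_div_iff₀ hpos]
    _ ≤ 2 * Real.exp (-(ε * (N : ℝ) ^ α) ^ 2 / (2 * (N * c : ℝ≥0))) :=
        measureReal_le_abs_of_hasSubgaussianMGF (hZ N) (by positivity)
    _ = 2 * Real.exp (-(ε ^ 2 / (2 * c)) * (N : ℝ) ^ (2 * α - 1)) := by
        rw [Real.rpow_sub hN0, Real.rpow_one, mul_comm 2 α, Real.rpow_mul hN0.le, Real.rpow_two]
        push_cast
        congr 2
        field_simp

end AlmostSure

section MeanMatchingCost

open scoped NNReal

variable {S : Type*} [MeasurableSpace S]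

lemma map_iid_comp {Ω : Type*} [MeasurableSpace Ω] {P : Measure Ω} [IsProbabilityMeasure P]
    {μ : Measure S} {ι κ : Type*} [Fintype κ] {W : ι → Ω → S} (hm : ∀ i, Measurable (W i))
    (hi : iIndepFun W P) (hl : ∀ i, P.map (W i) = μ) {e : κ → ι} (he : Function.Injective e) :
    P.map (fun ω k => W (e k) ω) = Measure.pi fun _ => μ := by
  rw [(iIndepFun_iff_map_fun_eq_pi_map fun k => (hm (e k)).aemeasurable).1 (hi.precomp he)]
  simp only [hl]

lemma measurePreserving_pi_comp (μ : Measure S) [IsProbabilityMeasure μ] {ι κ : Type*} [Fintype ι]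
    [Fintype κ] {e : κ → ι} (he : Function.Injective e) :
    MeasurePreserving (fun w : ι → S => w ∘ e) (Measure.pi fun _ => μ) (Measure.pi fun _ => μ) :=
  ⟨measurable_pi_lambda _ fun _ => measurable_pi_apply _,
    map_iid_comp measurable_pi_apply (iIndepFun_pi (X := fun _ s => s) fun _ => aemeasurable_id)
      (fun i => (measurePreserving_eval (fun _ => μ) i).map_eq) he⟩

lemma integral_comp_eq_of_measurePreserving {A B : Type*} [MeasurableSpace A] [MeasurableSpace B]
    {α : Measure A} {β : Measure B} {f : A → B} (hf : MeasurePreserving f α β) {g : B → ℝ}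
    (hg : AEStronglyMeasurable g β) : ∫ a, g (f a) ∂α = ∫ b, g b ∂β := by
  rw [← hf.map_eq] at hg ⊢
  exact (integral_map hf.measurable.aemeasurable hg).symm

/-- A measurable cost function with values in `[0, D]`. -/
structure IsBoundedCost (c : S → S → ℝ) (D : ℝ≥0) : Prop where
  measurable : Measurable fun p : S × S => c p.1 p.2
  nonneg : ∀ u v, 0 ≤ c u v
  le : ∀ u v, c u v ≤ D

/-- The mean of the minimum cost of a perfect matching between two independent families of `n`
independent points of law `μ`; the first family is indexed by the left summand of `Fin n ⊕ Fin n`,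
the second one by the right summand. -/
noncomputable def meanMatchingCost (μ : Measure S) (c : S → S → ℝ) (n : ℕ) : ℝ :=
  ∫ w : Fin n ⊕ Fin n → S, minMatchingCost c (w ∘ Sum.inl) (w ∘ Sum.inr) ∂Measure.pi fun _ => μ

variable {μ : Measure S} {c : S → S → ℝ} {D : ℝ≥0}

lemma meanMatchingCost_nonneg (hc : ∀ u v, 0 ≤ c u v) (n : ℕ) : 0 ≤ meanMatchingCost μ c n :=
  integral_nonneg fun _ => minMatchingCost_nonneg hc _ _

variable [IsProbabilityMeasure μ]

namespace IsBoundedCost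

variable {ι κ : Type*} [Fintype κ]

lemma measurable_minMatchingCost_comp (hc : IsBoundedCost c D) (e e' : κ → ι) :
    Measurable fun w : ι → S => minMatchingCost c (w ∘ e) (w ∘ e') :=
  measurable_minMatchingCost hc.measurable
    (measurable_pi_lambda _ fun _ => measurable_pi_apply _)
    (measurable_pi_lambda _ fun _ => measurable_pi_apply _)

lemma integrable_minMatchingCost_comp [Fintype ι] (hc : IsBoundedCost c D) (e e' : κ → ι) :
    Integrable (fun w : ι → S => minMatchingCost c (w ∘ e) (w ∘ e')) (Measure.pi fun _ => μ) :=
  integrable_of_measurable_of_abs_le (hc.measurable_minMatchingCost_comp e e')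
    (B := D * Fintype.card κ) fun w => by
      rw [abs_of_nonneg (minMatchingCost_nonneg hc.nonneg _ _)]
      exact minMatchingCost_le_mul_card hc.le _ _

lemma integral_minMatchingCost_comp [Fintype ι] (hc : IsBoundedCost c D) {n : ℕ}
    {e : Fin n ⊕ Fin n → ι} (he : Function.Injective e) :
    ∫ w : ι → S, minMatchingCost c (w ∘ e ∘ Sum.inl) (w ∘ e ∘ Sum.inr) ∂Measure.pi (fun _ => μ) =
      meanMatchingCost μ c n :=
  integral_comp_eq_of_measurePreserving (measurePreserving_pi_comp μ he)
    (hc.measurable_minMatchingCost_comp _ _).aestronglyMeasurable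

end IsBoundedCost

lemma IsBoundedCost.subadditive_meanMatchingCost (hc : IsBoundedCost c D) :
    Subadditive (meanMatchingCost μ c) := by
  intro n k
  let E : Fin n ⊕ Fin k ≃ Fin (n + k) := finSumFinEquiv
  let left : Fin n ⊕ Fin n → Fin (n + k) ⊕ Fin (n + k) := Sum.map (E ∘ Sum.inl) (E ∘ Sum.inl)
  let right : Fin k ⊕ Fin k → Fin (n + k) ⊕ Fin (n + k) := Sum.map (E ∘ Sum.inr) (E ∘ Sum.inr)
  have hleft : Function.Injective left := Function.Injective.sumMap
    (E.injective.comp Sum.inl_injective) (E.injective.comp Sum.inl_injective)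
  have hright : Function.Injective right := Function.Injective.sumMap
    (E.injective.comp Sum.inr_injective) (E.injective.comp Sum.inr_injective)
  rw [← hc.integral_minMatchingCost_comp hleft, ← hc.integral_minMatchingCost_comp hright,
    ← integral_add (hc.integrable_minMatchingCost_comp _ _)
      (hc.integrable_minMatchingCost_comp _ _)]
  refine integral_mono (hc.integrable_minMatchingCost_comp _ _)
    ((hc.integrable_minMatchingCost_comp _ _).add (hc.integrable_minMatchingCost_comp _ _))
    fun w => ?_
  rw [← minMatchingCost_comp_equiv E E]
  exact minMatchingCost_sum_le _ _

lemma IsBoundedCost.hasBoundedDifferences_minMatchingCost {ι : Type*} [Fintype ι]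
    (hc : IsBoundedCost c D) :
    HasBoundedDifferences
      (fun w : ι ⊕ ι → S => minMatchingCost c (w ∘ Sum.inl) (w ∘ Sum.inr)) fun _ => D := by
  classical
  intro k w w' hw
  have sum_card_le_one : (Finset.univ.filter fun i => w (Sum.inl i) ≠ w' (Sum.inl i)).card +
      (Finset.univ.filter fun i => w (Sum.inr i) ≠ w' (Sum.inr i)).card ≤ 1 := by
    have card_filter_le (f : ι → ι ⊕ ι) (s : Finset ι)
        (hs : ∀ i, f i = k → i ∈ s) :
        (Finset.univ.filter fun i => w (f i) ≠ w' (f i)).card ≤ s.card := by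
      refine Finset.card_le_card fun i hi => hs i ?_
      by_contra hik
      exact (Finset.mem_filter.1 hi).2 (hw _ hik)
    rcases k with k | k
    · simpa using add_le_add (card_filter_le Sum.inl {k} (by simp))
        (card_filter_le Sum.inr ∅ (by simp))
    · simpa using add_le_add (card_filter_le Sum.inl ∅ (by simp))
        (card_filter_le Sum.inr {k} (by simp))
  have hle := minMatchingCost_le_add_mul_card_ne hc.nonneg hc.le (w ∘ Sum.inl) (w' ∘ Sum.inl)
    (w ∘ Sum.inr) (w' ∘ Sum.inr)
  rw [sub_le_iff_le_add']
  refine hle.trans ?_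
  gcongr
  exact mul_le_of_le_one_right D.coe_nonneg (by exact_mod_cast sum_card_le_one)

section RandomSequences

variable {Ω : Type*} [MeasurableSpace Ω] {P : Measure Ω} [IsProbabilityMeasure P]
  {X Y : ℕ → Ω → S}

lemma IsBoundedCost.hasSubgaussianMGF_minMatchingCost_sub_mean (hc : IsBoundedCost c D)
    (hm : ∀ i, Measurable (Sum.elim X Y i)) (hi : iIndepFun (Sum.elim X Y) P)
    (hl : ∀ i, P.map (Sum.elim X Y i) = μ) (N : ℕ) :
    HasSubgaussianMGF (fun ω => minMatchingCost c (fun i : Fin N => X i ω)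
      (fun i : Fin N => Y i ω) - meanMatchingCost μ c N) (N * (D ^ 2 / 2)) P := by
  have hpi : HasSubgaussianMGF (fun w : Fin N ⊕ Fin N → S =>
      minMatchingCost c (w ∘ Sum.inl) (w ∘ Sum.inr) - meanMatchingCost μ c N)
      (∑ _i : Fin N ⊕ Fin N, (D / 2) ^ 2) (Measure.pi fun _ => μ) :=
    HasBoundedDifferences.hasSubgaussianMGF (fun _ => μ)
      (hc.measurable_minMatchingCost_comp Sum.inl Sum.inr)
      hc.hasBoundedDifferences_minMatchingCost
  have hV : Function.Injective (Sum.map Fin.val Fin.val : Fin N ⊕ Fin N → ℕ ⊕ ℕ) :=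
    Function.Injective.sumMap Fin.val_injective Fin.val_injective
  have hparam : ∑ _i : Fin N ⊕ Fin N, (D / 2) ^ 2 = N * (D ^ 2 / 2) := by
    ext
    push_cast
    simp
    ring
  rw [hparam, ← map_iid_comp hm hi hl hV] at hpi
  exact HasSubgaussianMGF.of_map
    (measurable_pi_lambda _ fun _ => hm _).aemeasurable hpi

theorem IsBoundedCost.ae_tendsto_minMatchingCost_sub_mean_div_rpow (hc : IsBoundedCost c D)
    (hD : 0 < D) (hm : ∀ i, Measurable (Sum.elim X Y i)) (hi : iIndepFun (Sum.elim X Y) P)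
    (hl : ∀ i, P.map (Sum.elim X Y i) = μ) {α : ℝ} (hα : 1 / 2 < α) :
    ∀ᵐ ω ∂P, Tendsto (fun N : ℕ => (minMatchingCost c (fun i : Fin N => X i ω)
      (fun i : Fin N => Y i ω) - meanMatchingCost μ c N) / (N : ℝ) ^ α) atTop (nhds 0) :=
  ae_tendsto_div_rpow_of_hasSubgaussianMGF (by positivity)
    (hc.hasSubgaussianMGF_minMatchingCost_sub_mean hm hi hl) hα

end RandomSequences

end MeanMatchingCost

section Balancing

variable {K ι : Type*} [Fintype K] [Fintype ι]

open Classical in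
/-- The total deviation from `n` of the sizes of the classes of a labelling `J`. -/
noncomputable def imbalance (n : ℕ) (J : ι → K) : ℝ :=
  ∑ k, |((Finset.univ.filter fun i => J i = k).card : ℝ) - n|

open Classical in
lemma exists_equiv_prod_forall_lt_card {n : ℕ} (hι : Fintype.card ι = Fintype.card K * n)
    (J : ι → K) : ∃ e : K × Fin n ≃ ι, ∀ k (i : Fin n),
      (i : ℕ) < (Finset.univ.filter fun a => J a = k).card → J (e (k, i)) = k := by
  have hcard : Fintype.card (K × Fin n) = Fintype.card ι := by simp [hι]
  let members (k : K) : List ι := (Finset.univ.filter fun a => J a = k).toList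
  let f (p : K × Fin n) : ι := (members p.1).getD p.2 (Fintype.equivOfCardEq hcard p)
  let s : Finset (K × Fin n) := Finset.univ.filter fun p => (p.2 : ℕ) < (members p.1).length
  have f_eq (k : K) (i : Fin n) (hi : (k, i) ∈ s) :
      ∃ h : (i : ℕ) < (members k).length, f (k, i) = (members k)[i] := by
    have hlt : (i : ℕ) < (members k).length := by simpa [s] using hi
    exact ⟨hlt, List.getD_eq_getElem _ _ hlt⟩
  have label_f (k : K) (i : Fin n) (hi : (k, i) ∈ s) : J (f (k, i)) = k := by
    obtain ⟨hlt, hfi⟩ := f_eq k i hi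
    have hmem : f (k, i) ∈ members k := hfi ▸ List.getElem_mem hlt
    simpa [members] using hmem
  have injOn_f : Set.InjOn f s := by
    rintro ⟨k, i⟩ hi ⟨l, j⟩ hj hij
    obtain rfl : k = l := by rw [← label_f k i hi, hij, label_f l j hj]
    obtain ⟨hi', hfi⟩ := f_eq k i hi
    obtain ⟨hj', hfj⟩ := f_eq k j hj
    rw [hfi, hfj] at hij
    rw [Fin.ext ((Finset.nodup_toList _).getElem_inj_iff.1 hij)]
  obtain ⟨g, hg⟩ := Finset.exists_equiv_extend_of_card_eq (t := Finset.univ)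
    (by simpa using hcard) (Finset.subset_univ _) injOn_f
  refine ⟨g.trans (Equiv.subtypeUnivEquiv Finset.mem_univ), fun k i hi => ?_⟩
  have his : (k, i) ∈ s := by simpa [s, members] using hi
  simpa [hg _ his] using label_f k i his

open Classical in
lemma exists_equiv_prod_card_ne_le_imbalance {n : ℕ} (hι : Fintype.card ι = Fintype.card K * n)
    (J : ι → K) : ∃ e : K × Fin n ≃ ι,
      ((Finset.univ.filter fun p => J (e p) ≠ p.1).card : ℝ) ≤ imbalance n J := by
  obtain ⟨e, he⟩ := exists_equiv_prod_forall_lt_card hι J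
  refine ⟨e, ?_⟩
  have card_fiber_le (k : K) : (Finset.univ.filter fun i : Fin n => J (e (k, i)) ≠ k).card ≤
      n - (Finset.univ.filter fun a => J a = k).card := by
    calc _ ≤ ((Finset.Ico (Finset.univ.filter fun a => J a = k).card n)).card := by
          refine Finset.card_le_card_of_injOn Fin.val (fun i hi => ?_) Fin.val_injective.injOn
          have hne := (Finset.mem_filter.1 hi).2
          exact Finset.mem_Ico.2 ⟨not_lt.1 fun hlt => hne (he k i hlt), i.isLt⟩
      _ = _ := Nat.card_Ico _ _
  calc ((Finset.univ.filter fun p => J (e p) ≠ p.1).card : ℝ)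
      = ∑ k, ((Finset.univ.filter fun i : Fin n => J (e (k, i)) ≠ k).card : ℝ) := by
        simp only [Finset.card_filter, Fintype.sum_prod_type, Nat.cast_sum]
    _ ≤ ∑ k, ((n - (Finset.univ.filter fun a => J a = k).card : ℕ) : ℝ) :=
        Finset.sum_le_sum fun k _ => by exact_mod_cast card_fiber_le k
    _ ≤ imbalance n J := Finset.sum_le_sum fun k _ => by
        rcases le_total n (Finset.univ.filter fun a => J a = k).card with h | h
        · simp [Nat.sub_eq_zero_of_le h]
        · rw [Nat.cast_sub h, abs_sub_comm]
          exact le_abs_self _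

end Balancing

section Counting

lemma integral_abs_sub_integral_le_sqrt_variance {Ω : Type*} [MeasurableSpace Ω] {P : Measure Ω}
    [IsProbabilityMeasure P] {Z : Ω → ℝ} (hZ : MemLp Z 2 P) :
    ∫ ω, |Z ω - ∫ ω', Z ω' ∂P| ∂P ≤ √(variance Z P) := by
  refine Real.le_sqrt_of_sq_le ?_
  have hdev : MemLp (fun ω => |Z ω - ∫ ω', Z ω' ∂P|) 2 P := (hZ.sub (memLp_const _)).abs
  have hvar := variance_nonneg (fun ω => |Z ω - ∫ ω', Z ω' ∂P|) P
  rw [variance_eq_sub hdev] at hvar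
  rw [variance_eq_integral hZ.aemeasurable]
  simpa using hvar

variable {S ι : Type*} [MeasurableSpace S] [Fintype ι] (μ : Measure S) [IsProbabilityMeasure μ]
  {s : Set S}

lemma memLp_indicator_one (hs : MeasurableSet s) : MemLp (s.indicator (1 : S → ℝ)) 2 μ :=
  memLp_indicator_const 2 hs 1 (Or.inr (measure_ne_top μ s))

lemma integral_sum_indicator_one (hs : MeasurableSet s) :
    ∫ x : ι → S, ∑ i, s.indicator (1 : S → ℝ) (x i) ∂Measure.pi (fun _ => μ) =
      Fintype.card ι * μ.real s := by
  have hint := (memLp_indicator_one μ hs).integrable one_le_two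
  have integral_eval (i : ι) :
      ∫ x : ι → S, s.indicator (1 : S → ℝ) (x i) ∂Measure.pi (fun _ => μ) = μ.real s := by
    rw [← integral_indicator_one hs]
    exact integral_comp_eval (μ := fun _ => μ) hint.aestronglyMeasurable
  rw [integral_finsetSum _ fun i _ => integrable_comp_eval (μ := fun _ => μ) hint]
  simp [integral_eval]

lemma variance_sum_indicator_one_le (hs : MeasurableSet s) :
    variance (fun x : ι → S => ∑ i, s.indicator (1 : S → ℝ) (x i)) (Measure.pi fun _ => μ) ≤
      Fintype.card ι * μ.real s := by
  have hsum := variance_sum_pi (ι := ι) (μ := fun _ => μ) fun _ => memLp_indicator_one μ hs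
  have variance_le : variance (s.indicator (1 : S → ℝ)) μ ≤ μ.real s := by
    refine (variance_le_expectation_sq (memLp_indicator_one μ hs).aestronglyMeasurable).trans ?_
    rw [← integral_indicator_one hs]
    refine le_of_eq (integral_congr_ae (Eventually.of_forall fun x => ?_))
    by_cases hx : x ∈ s <;> simp [hx]
  rw [show (fun x : ι → S => ∑ i, s.indicator (1 : S → ℝ) (x i)) =
    ∑ i, fun x : ι → S => s.indicator (1 : S → ℝ) (x i) by ext; simp, hsum]
  simpa using mul_le_mul_of_nonneg_left variance_le (Fintype.card ι).cast_nonneg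

lemma integral_abs_sum_indicator_one_sub_le (hs : MeasurableSet s) :
    ∫ x : ι → S, |∑ i, s.indicator (1 : S → ℝ) (x i) - Fintype.card ι * μ.real s|
      ∂Measure.pi (fun _ => μ) ≤ √(Fintype.card ι * μ.real s) := by
  have hmem : MemLp (fun x : ι → S => ∑ i, s.indicator (1 : S → ℝ) (x i)) 2
      (Measure.pi fun _ => μ) := memLp_finsetSum _ fun i _ =>
    (memLp_indicator_one μ hs).comp_measurePreserving (measurePreserving_eval _ i)
  rw [← integral_sum_indicator_one μ hs]
  exact (integral_abs_sub_integral_le_sqrt_variance hmem).trans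
    (Real.sqrt_le_sqrt ((variance_sum_indicator_one_le μ hs).trans_eq
      (integral_sum_indicator_one μ hs).symm))

lemma integral_imbalance_le {K : Type*} [Fintype K] [Nonempty K] [MeasurableSpace K]
    [MeasurableSingletonClass K] {n : ℕ} (hι : Fintype.card ι = Fintype.card K * n) :
    ∫ J : ι → K, imbalance n J ∂Measure.pi (fun _ => uniformOn Set.univ) ≤
      Fintype.card K * √n := by
  have card_mul_uniform (k : K) :
      Fintype.card ι * (uniformOn (Set.univ : Set K)).real {k} = n := by
    simp [measureReal_def, uniformOn_univ, hι]
    field_simp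
  have integral_class_le (k : K) : ∫ J : ι → K, |∑ i, ({k} : Set K).indicator 1 (J i) - (n : ℝ)|
      ∂Measure.pi (fun _ => uniformOn Set.univ) ≤ √n := by
    simpa only [card_mul_uniform] using integral_abs_sum_indicator_one_sub_le (ι := ι)
      (uniformOn Set.univ) (measurableSet_singleton k)
  have imbalance_eq (J : ι → K) :
      imbalance n J = ∑ k, |∑ i, ({k} : Set K).indicator 1 (J i) - (n : ℝ)| := by
    classical simp [imbalance, Set.indicator, Finset.sum_boole]
  calc ∫ J : ι → K, imbalance n J ∂Measure.pi (fun _ => uniformOn Set.univ)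
      = ∑ k, ∫ J : ι → K, |∑ i, ({k} : Set K).indicator 1 (J i) - (n : ℝ)|
          ∂Measure.pi (fun _ => uniformOn Set.univ) := by
        simp only [imbalance_eq]
        exact integral_finsetSum _ fun k _ => Integrable.of_finite
    _ ≤ ∑ _k : K, √n := Finset.sum_le_sum fun k _ => integral_class_le k
    _ = Fintype.card K * √n := by simp

end Counting

section Scaling

open scoped NNReal

variable {S K : Type*} [Fintype K] {c : S → S → ℝ} {D : ℝ≥0} {T : K → S → S} {r : ℝ}

lemma exists_equiv_forall_minMatchingCost_le_sum_add_imbalance (h0 : ∀ u v, 0 ≤ c u v)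
    (hD : ∀ u v, c u v ≤ D) (hTc : ∀ k u v, c (T k u) (T k v) ≤ r * c u v) {ι : Type*} [Fintype ι]
    {n : ℕ} (hι : Fintype.card ι = Fintype.card K * n) (J J' : ι → K) :
    ∃ e e' : K × Fin n ≃ ι, ∀ x y : ι → S,
      minMatchingCost c (fun i => T (J i) (x i)) (fun i => T (J' i) (y i)) ≤
        ∑ k, r * minMatchingCost c (fun i => x (e (k, i))) (fun i => y (e' (k, i))) +
          D * (imbalance n J + imbalance n J') := by
  classical
  obtain ⟨e, he⟩ := exists_equiv_prod_card_ne_le_imbalance hι J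
  obtain ⟨e', he'⟩ := exists_equiv_prod_card_ne_le_imbalance hι J'
  have card_ne_le (x : ι → S) (L : ι → K) (g : K × Fin n ≃ ι) :
      (Finset.univ.filter fun p => T (L (g p)) (x (g p)) ≠ T p.1 (x (g p))).card ≤
        (Finset.univ.filter fun p => L (g p) ≠ p.1).card :=
    Finset.card_le_card fun p hp => by
      simp only [Finset.mem_filter, Finset.mem_univ, true_and] at hp ⊢
      exact fun h => hp (by rw [h])
  refine ⟨e, e', fun x y => ?_⟩
  calc minMatchingCost c (fun i => T (J i) (x i)) (fun i => T (J' i) (y i))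
      = minMatchingCost c (fun p => T (J (e p)) (x (e p))) (fun p => T (J' (e' p)) (y (e' p))) :=
        (minMatchingCost_comp_equiv e e' _ _).symm
    _ ≤ minMatchingCost c (fun p => T p.1 (x (e p))) (fun p => T p.1 (y (e' p))) +
          D * (imbalance n J + imbalance n J') := by
        refine (minMatchingCost_le_add_mul_card_ne h0 hD _ (fun p => T p.1 (x (e p))) _
          fun p => T p.1 (y (e' p))).trans ?_
        gcongr
        · exact (Nat.cast_le.2 (card_ne_le x J e)).trans he
        · exact (Nat.cast_le.2 (card_ne_le y J' e')).trans he'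
    _ ≤ _ := by
        gcongr
        exact (minMatchingCost_prod_le _ _).trans
          (Finset.sum_le_sum fun k _ => minMatchingCost_comp_le_mul (hTc k) _ _)

variable [MeasurableSpace S] {μ : Measure S} [IsProbabilityMeasure μ]

lemma IsBoundedCost.integral_minMatchingCost_le_of_labelling (hc : IsBoundedCost c D)
    (hTc : ∀ k u v, c (T k u) (T k v) ≤ r * c u v) {n : ℕ} {ι : Type*} [Fintype ι]
    (hι : Fintype.card ι = Fintype.card K * n) (J : ι ⊕ ι → K) :
    ∫ w : ι ⊕ ι → S, minMatchingCost c (fun i => T (J (Sum.inl i)) (w (Sum.inl i)))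
        (fun i => T (J (Sum.inr i)) (w (Sum.inr i))) ∂Measure.pi (fun _ => μ) ≤
      Fintype.card K * r * meanMatchingCost μ c n +
        D * (imbalance n (J ∘ Sum.inl) + imbalance n (J ∘ Sum.inr)) := by
  obtain ⟨e, e', hle⟩ := exists_equiv_forall_minMatchingCost_le_sum_add_imbalance hc.nonneg hc.le
    hTc hι (J ∘ Sum.inl) (J ∘ Sum.inr)
  let cell (k : K) : Fin n ⊕ Fin n → ι ⊕ ι := Sum.map (fun i => e (k, i)) (fun i => e' (k, i))
  have cell_injective (k : K) : Function.Injective (cell k) := Function.Injective.sumMap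
    (e.injective.comp (Prod.mk_right_injective k)) (e'.injective.comp (Prod.mk_right_injective k))
  have integrable_cell (k : K) : Integrable (fun w : ι ⊕ ι → S =>
      r * minMatchingCost c (w ∘ cell k ∘ Sum.inl) (w ∘ cell k ∘ Sum.inr))
      (Measure.pi fun _ => μ) := (hc.integrable_minMatchingCost_comp _ _).const_mul r
  have integrable_sum := integrable_finsetSum Finset.univ fun k _ => integrable_cell k
  calc ∫ w : ι ⊕ ι → S, minMatchingCost c (fun i => T (J (Sum.inl i)) (w (Sum.inl i)))
        (fun i => T (J (Sum.inr i)) (w (Sum.inr i))) ∂Measure.pi (fun _ => μ)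
      ≤ ∫ w : ι ⊕ ι → S, (∑ k, r * minMatchingCost c (w ∘ cell k ∘ Sum.inl)
          (w ∘ cell k ∘ Sum.inr) + D * (imbalance n (J ∘ Sum.inl) + imbalance n (J ∘ Sum.inr)))
          ∂Measure.pi (fun _ => μ) :=
        integral_mono_of_nonneg (Eventually.of_forall fun w => minMatchingCost_nonneg hc.nonneg _ _)
          (integrable_sum.add (integrable_const _))
          (Eventually.of_forall fun w => hle (w ∘ Sum.inl) (w ∘ Sum.inr))
    _ = _ := by
        rw [integral_add integrable_sum (integrable_const _),
          integral_finsetSum _ fun k _ => integrable_cell k]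
        simp [integral_const_mul, hc.integral_minMatchingCost_comp (cell_injective _), mul_assoc]

lemma measurePreserving_pi_uncurry {A B C ι : Type*} [MeasurableSpace A] [MeasurableSpace B]
    [MeasurableSpace C] [Fintype ι] {α : Measure A} {β : Measure B} {γ : Measure C}
    [SigmaFinite α] [SigmaFinite β] [SigmaFinite γ] {f : A → B → C}
    (hf : MeasurePreserving (fun p : A × B => f p.1 p.2) (α.prod β) γ) :
    MeasurePreserving (fun p : (ι → A) × (ι → B) => fun i => f (p.1 i) (p.2 i))
      ((Measure.pi fun _ => α).prod (Measure.pi fun _ => β)) (Measure.pi fun _ => γ) :=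
  (measurePreserving_pi _ _ fun _ => hf).comp
    (measurePreserving_arrowProdEquivProdArrow A B ι (fun _ => α) (fun _ => β)).symm

theorem IsBoundedCost.meanMatchingCost_card_mul_le [Nonempty K] [MeasurableSpace K]
    [MeasurableSingletonClass K] (hc : IsBoundedCost c D)
    (hTc : ∀ k u v, c (T k u) (T k v) ≤ r * c u v)
    (hT : MeasurePreserving (fun p : K × S => T p.1 p.2) ((uniformOn Set.univ).prod μ) μ) (n : ℕ) :
    meanMatchingCost μ c (Fintype.card K * n) ≤
      Fintype.card K * r * meanMatchingCost μ c n + 2 * D * Fintype.card K * √n := by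
  obtain ⟨N, hN⟩ : ∃ N, N = Fintype.card K * n := ⟨_, rfl⟩
  let κ := Fin N ⊕ Fin N
  let ν : Measure (κ → K) := Measure.pi fun _ => uniformOn Set.univ
  let ρ : Measure (κ → S) := Measure.pi fun _ => μ
  let F (w : κ → S) : ℝ := minMatchingCost c (w ∘ Sum.inl) (w ∘ Sum.inr)
  have hF : Integrable F ρ := hc.integrable_minMatchingCost_comp _ _
  have hpi := measurePreserving_pi_uncurry (ι := κ) hT
  have integral_imbalance_comp_le {f : Fin N → κ} (hf : Function.Injective f) :
      ∫ J, imbalance n (J ∘ f) ∂ν ≤ Fintype.card K * √n :=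
    (integral_comp_eq_of_measurePreserving (measurePreserving_pi_comp _ hf)
      (measurable_of_finite _).aestronglyMeasurable).trans_le
      (integral_imbalance_le (by simpa using hN))
  calc meanMatchingCost μ c (Fintype.card K * n) = ∫ w, F w ∂ρ := by rw [← hN]; rfl
    _ = ∫ p, F (fun i => T (p.1 i) (p.2 i)) ∂ν.prod ρ :=
        (integral_comp_eq_of_measurePreserving hpi hF.aestronglyMeasurable).symm
    _ = ∫ J, ∫ w, F (fun i => T (J i) (w i)) ∂ρ ∂ν :=
        integral_prod _ (hpi.integrable_comp_of_integrable hF)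
    _ ≤ ∫ J, (Fintype.card K * r * meanMatchingCost μ c n +
          D * (imbalance n (J ∘ Sum.inl) + imbalance n (J ∘ Sum.inr))) ∂ν :=
        integral_mono Integrable.of_finite Integrable.of_finite fun J =>
          hc.integral_minMatchingCost_le_of_labelling hTc (by simpa using hN) J
    _ = Fintype.card K * r * meanMatchingCost μ c n +
          D * (∫ J, imbalance n (J ∘ Sum.inl) ∂ν + ∫ J, imbalance n (J ∘ Sum.inr) ∂ν) := by
        rw [integral_add (integrable_const _) Integrable.of_finite, integral_const,
          integral_const_mul, integral_add Integrable.of_finite Integrable.of_finite]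
        simp
    _ ≤ Fintype.card K * r * meanMatchingCost μ c n +
          D * (Fintype.card K * √n + Fintype.card K * √n) := by
        gcongr
        · exact integral_imbalance_comp_le Sum.inl_injective
        · exact integral_imbalance_comp_le Sum.inr_injective
    _ = _ := by ring

end Scaling

section LowerBound

open scoped NNReal

lemma measureReal_prod_le_of_forall_measureReal_preimage_le {A B : Type*} [MeasurableSpace A]
    [MeasurableSpace B] {α : Measure A} {β : Measure B} [IsProbabilityMeasure α]
    [IsFiniteMeasure β] {s : Set (A × B)} (hs : MeasurableSet s) {p : ℝ}
    (hp : ∀ a, β.real (Prod.mk a ⁻¹' s) ≤ p) : (α.prod β).real s ≤ p := by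
  obtain ⟨a₀⟩ : Nonempty A := nonempty_of_isProbabilityMeasure α
  refine ENNReal.toReal_le_of_le_ofReal (measureReal_nonneg.trans (hp a₀)) ?_
  calc α.prod β s = ∫⁻ a, β (Prod.mk a ⁻¹' s) ∂α := Measure.prod_apply hs
    _ ≤ ∫⁻ _a, ENNReal.ofReal p ∂α := lintegral_mono fun a =>
        (ofReal_measureReal (μ := β)).symm.trans_le (ENNReal.ofReal_le_ofReal (hp a))
    _ = ENNReal.ofReal p := by simp

variable {S : Type*} [MeasurableSpace S] {μ : Measure S} [IsProbabilityMeasure μ] {c : S → S → ℝ}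

lemma measurePreserving_eval_prodMk {ι : Type*} [Fintype ι] {i j : ι} (hij : i ≠ j) :
    MeasurePreserving (fun w : ι → S => (w i, w j)) (Measure.pi fun _ => μ) (μ.prod μ) := by
  have hind : iIndepFun (fun (k : ι) (w : ι → S) => w k) (Measure.pi fun _ => μ) :=
    iIndepFun_pi (X := fun _ s => s) fun _ => aemeasurable_id
  refine ⟨by fun_prop, ?_⟩
  rw [(indepFun_iff_map_prod_eq_prod_map_map (measurable_pi_apply _).aemeasurable
    (measurable_pi_apply _).aemeasurable).1 (hind.indepFun hij)]
  simp only [(measurePreserving_eval (fun _ => μ) _).map_eq]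

theorem IsBoundedCost.mul_sub_sq_mul_le_meanMatchingCost {D : ℝ≥0} (hc : IsBoundedCost c D)
    {r p : ℝ} (hr : 0 ≤ r) (hp : ∀ u, μ.real {v | c u v < r} ≤ p) (n : ℕ) :
    r * (n - n ^ 2 * p) ≤ meanMatchingCost μ c n := by
  let near : Set (S × S) := {q | c q.1 q.2 < r}
  let isNear (q : Fin n × Fin n) (w : Fin n ⊕ Fin n → S) : ℝ :=
    near.indicator 1 (w (Sum.inl q.1), w (Sum.inr q.2))
  have hnear : MeasurableSet near := measurableSet_lt hc.measurable measurable_const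
  have hpair (q : Fin n × Fin n) := measurePreserving_eval_prodMk (μ := μ)
    (show (Sum.inl q.1 : Fin n ⊕ Fin n) ≠ Sum.inr q.2 from Sum.inl_ne_inr)
  have integrable_indicator : Integrable (near.indicator (1 : S × S → ℝ)) (μ.prod μ) :=
    (integrable_const 1).indicator hnear
  have integrable_isNear (q : Fin n × Fin n) : Integrable (isNear q) (Measure.pi fun _ => μ) :=
    (hpair q).integrable_comp_of_integrable integrable_indicator
  have integral_isNear_le (q : Fin n × Fin n) : ∫ w, isNear q w ∂Measure.pi (fun _ => μ) ≤ p := by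
    calc ∫ w, isNear q w ∂Measure.pi (fun _ => μ) = (μ.prod μ).real near := by
          rw [← integral_indicator_one hnear]
          exact integral_comp_eq_of_measurePreserving (hpair q)
            integrable_indicator.aestronglyMeasurable
      _ ≤ p := measureReal_prod_le_of_forall_measureReal_preimage_le hnear hp
  have integrable_sum := integrable_finsetSum Finset.univ fun q _ => integrable_isNear q
  have mul_sub_sum_le (w : Fin n ⊕ Fin n → S) :
      r * (n - ∑ q, isNear q w) ≤ minMatchingCost c (w ∘ Sum.inl) (w ∘ Sum.inr) := by
    classical
    simpa [isNear, near, Set.indicator, Finset.sum_boole] using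
      mul_card_sub_card_lt_le_minMatchingCost hc.nonneg hr (w ∘ Sum.inl) (w ∘ Sum.inr)
  calc r * (n - n ^ 2 * p)
      = r * (n - ∑ _q : Fin n × Fin n, p) := by simp [sq]
    _ ≤ r * (n - ∑ q, ∫ w, isNear q w ∂Measure.pi (fun _ => μ)) := by
        gcongr with q
        exact integral_isNear_le q
    _ = ∫ w, r * (n - ∑ q, isNear q w) ∂Measure.pi (fun _ => μ) := by
        rw [integral_const_mul, integral_sub (integrable_const _) integrable_sum,
          integral_finsetSum _ fun q _ => integrable_isNear q]
        simp
    _ ≤ meanMatchingCost μ c n :=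
        integral_mono (((integrable_const _).sub integrable_sum).const_mul r)
          (hc.integrable_minMatchingCost_comp _ _) mul_sub_sum_le

end LowerBound

section AlmostHomogeneous

lemma exists_tendsto_of_eventually_le_add {g : ℕ → ℝ} (hg : BddBelow (Set.range g))
    (h : ∀ ε > 0, ∀ᶠ n in atTop, ∀ᶠ N in atTop, g N ≤ g n + ε) :
    ∃ β, Tendsto g atTop (nhds β) := by
  have hbelow : IsBoundedUnder (· ≥ ·) atTop g := hg.isBoundedUnder_of_range
  have habove : IsBoundedUnder (· ≤ ·) atTop g := by
    obtain ⟨n, hn⟩ := (h 1 one_pos).exists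
    exact isBoundedUnder_of_eventually_le hn
  have limsup_le : limsup g atTop ≤ liminf g atTop := by
    refine le_of_forall_pos_le_add fun ε hε => ?_
    rw [← sub_le_iff_le_add]
    refine le_liminf_of_le habove.isCoboundedUnder_ge ((h ε hε).mono fun n hn => ?_)
    exact sub_le_iff_le_add.2 (limsup_le_of_le hbelow.isCoboundedUnder_le hn)
  exact ⟨_, tendsto_of_le_liminf_of_limsup_le le_rfl limsup_le habove hbelow⟩

lemma exists_mul_two_pow_le_lt {M t : ℕ} (hM : 0 < M) (ht : M ≤ t) :
    ∃ m k, M ≤ m ∧ m < 2 * M ∧ m * 2 ^ k ≤ t ∧ t < (m + 1) * 2 ^ k := by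
  have hpos (k : ℕ) : 0 < 2 ^ k := by positivity
  set k := Nat.log 2 (t / M)
  have two_pow_le : 2 ^ k ≤ t / M := Nat.pow_log_le_self 2 (Nat.div_pos ht hM).ne'
  have lt_two_pow : t / M < 2 ^ (k + 1) := Nat.lt_pow_succ_log_self one_lt_two _
  refine ⟨t / 2 ^ k, k, ?_, ?_, Nat.div_mul_le_self _ _, ?_⟩
  · rw [Nat.le_div_iff_mul_le (hpos k), mul_comm]
    exact (Nat.le_div_iff_mul_le hM).1 two_pow_le
  · rw [Nat.div_lt_iff_lt_mul (hpos k)]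
    rw [Nat.div_lt_iff_lt_mul hM] at lt_two_pow
    exact lt_two_pow.trans_eq (by ring)
  · exact Nat.lt_mul_of_div_lt (Nat.lt_succ_self _) (hpos k)

lemma exists_dyadic_pow_mul_le_lt {d n M N : ℕ} (hd : d ≠ 0) (hn : 0 < n) (hM : 0 < M)
    (hN : M ^ d * n ≤ N) :
    ∃ m k, M ≤ m ∧ m < 2 * M ∧ (m * 2 ^ k) ^ d * n ≤ N ∧ N < ((m + 1) * 2 ^ k) ^ d * n := by
  have le_nthRoot : M ≤ Nat.nthRoot d (N / n) := by
    rw [Nat.le_nthRoot_iff hd, Nat.le_div_iff_mul_le hn]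
    exact hN
  obtain ⟨m, k, hMm, hmM, hle, hlt⟩ := exists_mul_two_pow_le_lt hM le_nthRoot
  refine ⟨m, k, hMm, hmM, ?_, ?_⟩
  · rw [← Nat.le_div_iff_mul_le hn]
    exact (Nat.le_nthRoot_iff hd).1 hle
  · rw [← Nat.div_lt_iff_lt_mul hn]
    exact (Nat.nthRoot_lt_iff hd).1 hlt

lemma le_pow_rpow_mul {b : ℕ → ℝ} {q : ℕ} {α : ℝ} (hq : ∀ n, b (q * n) ≤ (q : ℝ) ^ α * b n)
    (k n : ℕ) : b (q ^ k * n) ≤ ((q : ℝ) ^ k) ^ α * b n := by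
  induction k with
  | zero => simp
  | succ k ih =>
    calc b (q ^ (k + 1) * n) = b (q * (q ^ k * n)) := by rw [pow_succ', mul_assoc]
      _ ≤ (q : ℝ) ^ α * (((q : ℝ) ^ k) ^ α * b n) := (hq _).trans (by gcongr)
      _ = ((q : ℝ) ^ (k + 1)) ^ α * b n := by
        rw [pow_succ', Real.mul_rpow (by positivity) (by positivity), mul_assoc]

lemma exists_le_mul_rpow_of_subadditive {b : ℕ → ℝ} (hb : Subadditive b) {q : ℕ} (hq : 2 ≤ q)
    {α : ℝ} (hα : 0 < α) (hbq : ∀ n, b (q * n) ≤ (q : ℝ) ^ α * b n) :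
    ∃ E, 0 ≤ E ∧ ∀ n, n ≠ 0 → b n ≤ E * (n : ℝ) ^ α := by
  obtain ⟨K, hK⟩ := ((Finset.range q).finite_toSet.image b).bddAbove
  have le_K (r : ℕ) (hr : r < q) : b r ≤ |K| :=
    (hK ⟨r, by simpa using hr, rfl⟩).trans (le_abs_self K)
  have one_lt_rpow : 1 < (q : ℝ) ^ α := Real.one_lt_rpow (by exact_mod_cast hq) hα
  set F := |K| / ((q : ℝ) ^ α - 1)
  have hF0 : 0 ≤ F := div_nonneg (abs_nonneg K) (by linarith)
  have F_mul : F * ((q : ℝ) ^ α - 1) = |K| := div_mul_cancel₀ _ (by linarith)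
  have le_sub (n : ℕ) (hn : n ≠ 0) : b n ≤ (|K| + F) * (n : ℝ) ^ α - F := by
    induction n using Nat.strong_induction_on with
    | _ n ih =>
      rcases lt_or_ge n q with hnq | hqn
      · have one_le_rpow : 1 ≤ (n : ℝ) ^ α :=
          Real.one_le_rpow (by exact_mod_cast Nat.one_le_iff_ne_zero.2 hn) hα.le
        nlinarith [le_K n hnq, abs_nonneg K]
      · have hdiv := ih (n / q) (Nat.div_lt_self (by omega) hq) (Nat.div_pos hqn (by omega)).ne'
        calc b n = b (q * (n / q) + n % q) := by rw [Nat.div_add_mod]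
          _ ≤ (q : ℝ) ^ α * b (n / q) + |K| :=
            (hb _ _).trans (add_le_add (hbq _) (le_K _ (Nat.mod_lt _ (by omega))))
          _ ≤ (q : ℝ) ^ α * ((|K| + F) * ((n / q : ℕ) : ℝ) ^ α - F) + |K| := by gcongr
          _ = (|K| + F) * ((q * (n / q) : ℕ) : ℝ) ^ α - F := by
            rw [Nat.cast_mul, Real.mul_rpow (by positivity) (by positivity)]
            linear_combination -F_mul
          _ ≤ (|K| + F) * (n : ℝ) ^ α - F := by
            gcongr
            exact Nat.mul_div_le n q
  exact ⟨|K| + F, by positivity, fun n hn => (le_sub n hn).trans (by linarith)⟩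

lemma tendsto_rpow_div_rpow {γ α : ℝ} (h : γ < α) :
    Tendsto (fun n : ℕ => (n : ℝ) ^ γ / (n : ℝ) ^ α) atTop (nhds 0) := by
  refine ((tendsto_rpow_neg_atTop (sub_pos.2 h)).comp tendsto_natCast_atTop_atTop).congr'
    ((eventually_gt_atTop 0).mono fun n hn => ?_)
  rw [Function.comp_apply, neg_sub, Real.rpow_sub (by exact_mod_cast hn)]

lemma div_rpow_le_of_dyadic {b : ℕ → ℝ} (hb0 : ∀ n, 0 ≤ b n) {d : ℕ} {α γ C : ℝ} (hα : 0 ≤ α)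
    (hC : 0 ≤ C) (hb2 : ∀ n, b (2 ^ d * n) ≤ ((2 ^ d : ℕ) : ℝ) ^ α * b n)
    (hb : ∀ m n, m ≠ 0 → b (m ^ d * n) ≤ ((m : ℝ) ^ d) ^ α * b n + C * m ^ d * (n : ℝ) ^ γ)
    {m k n N : ℕ} (hm : m ≠ 0) (hn : n ≠ 0) (hN : (m * 2 ^ k) ^ d * n ≤ N) :
    b ((m * 2 ^ k) ^ d * n) / (N : ℝ) ^ α ≤
      b n / (n : ℝ) ^ α + C * m ^ d * ((n : ℝ) ^ γ / (n : ℝ) ^ α) := by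
  have split : (m * 2 ^ k) ^ d * n = (2 ^ d) ^ k * (m ^ d * n) := by ring
  have hm1 : 1 ≤ ((m : ℝ) ^ d) ^ α :=
    Real.one_le_rpow (one_le_pow₀ (by exact_mod_cast Nat.one_le_iff_ne_zero.2 hm)) hα
  have : 0 < (n : ℝ) ^ α := by positivity
  set Q : ℝ := (((2 ^ d : ℕ) : ℝ) ^ k) ^ α
  have hQ : 0 < Q := by positivity
  have rpow_eq : (((m * 2 ^ k) ^ d * n : ℕ) : ℝ) ^ α = Q * ((m : ℝ) ^ d) ^ α * (n : ℝ) ^ α := by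
    rw [split]
    push_cast
    rw [Real.mul_rpow (by positivity) (by positivity),
      Real.mul_rpow (by positivity) (by positivity)]
    simp [Q, mul_assoc]
  calc b ((m * 2 ^ k) ^ d * n) / (N : ℝ) ^ α
      ≤ b ((m * 2 ^ k) ^ d * n) / (((m * 2 ^ k) ^ d * n : ℕ) : ℝ) ^ α := by
        gcongr
        exact hb0 _
    _ ≤ Q * (((m : ℝ) ^ d) ^ α * b n + C * m ^ d * (n : ℝ) ^ γ) /
          (Q * ((m : ℝ) ^ d) ^ α * (n : ℝ) ^ α) := by
        rw [rpow_eq, split]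
        gcongr
        exact (le_pow_rpow_mul hb2 k _).trans (by gcongr; exact hb m n hm)
    _ = b n / (n : ℝ) ^ α + C * m ^ d * ((n : ℝ) ^ γ / (n : ℝ) ^ α) / ((m : ℝ) ^ d) ^ α := by
        field_simp
    _ ≤ b n / (n : ℝ) ^ α + C * m ^ d * ((n : ℝ) ^ γ / (n : ℝ) ^ α) := by
        gcongr
        exact div_le_self (by positivity) hm1

lemma sub_le_mul_of_dyadic {d m k n N M : ℕ} (hM : M ≠ 0) (hMm : M ≤ m)
    (hle : (m * 2 ^ k) ^ d * n ≤ N) (hlt : N < ((m + 1) * 2 ^ k) ^ d * n) :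
    ((N - (m * 2 ^ k) ^ d * n : ℕ) : ℝ) ≤ ((1 + 1 / (M : ℝ)) ^ d - 1) * N := by
  have hm : 0 < (m : ℝ) := by exact_mod_cast (Nat.pos_of_ne_zero hM).trans_le hMm
  have : 0 < (M : ℝ) := by exact_mod_cast Nat.pos_of_ne_zero hM
  have hle' : (((m * 2 ^ k) ^ d * n : ℕ) : ℝ) ≤ N := by exact_mod_cast hle
  have N_le : (N : ℝ) ≤ (1 + 1 / (m : ℝ)) ^ d * ((m * 2 ^ k) ^ d * n : ℕ) := by
    calc (N : ℝ) ≤ (((m + 1) * 2 ^ k) ^ d * n : ℕ) := by exact_mod_cast hlt.le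
      _ = (1 + 1 / (m : ℝ)) ^ d * ((m * 2 ^ k) ^ d * n : ℕ) := by
        push_cast
        rw [← mul_assoc, ← mul_pow]
        congr 2
        field_simp
  calc ((N - (m * 2 ^ k) ^ d * n : ℕ) : ℝ) = N - ((m * 2 ^ k) ^ d * n : ℕ) := Nat.cast_sub hle
    _ ≤ ((1 + 1 / (m : ℝ)) ^ d - 1) * ((m * 2 ^ k) ^ d * n : ℕ) := by linarith
    _ ≤ ((1 + 1 / (M : ℝ)) ^ d - 1) * N := by
        have one_le_pow : 1 ≤ (1 + 1 / (M : ℝ)) ^ d := one_le_pow₀ (by simp)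
        gcongr

lemma div_rpow_le_div_rpow_add {b : ℕ → ℝ} (hb0 : ∀ n, 0 ≤ b n) (hbs : Subadditive b) {d : ℕ}
    (hd : d ≠ 0) {α γ C E : ℝ} (hα : 0 ≤ α) (hC : 0 ≤ C) (hE : 0 ≤ E)
    (hbE : ∀ n, n ≠ 0 → b n ≤ E * (n : ℝ) ^ α)
    (hb2 : ∀ n, b (2 ^ d * n) ≤ ((2 ^ d : ℕ) : ℝ) ^ α * b n)
    (hb : ∀ m n, m ≠ 0 → b (m ^ d * n) ≤ ((m : ℝ) ^ d) ^ α * b n + C * m ^ d * (n : ℝ) ^ γ)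
    {M n N : ℕ} (hM : M ≠ 0) (hn : n ≠ 0) (hN : M ^ d * n ≤ N) :
    b N / (N : ℝ) ^ α ≤ b n / (n : ℝ) ^ α + C * (2 * M) ^ d * ((n : ℝ) ^ γ / (n : ℝ) ^ α) +
      E * ((1 + 1 / (M : ℝ)) ^ d - 1) ^ α := by
  obtain ⟨m, k, hMm, hmM, hle, hlt⟩ := exists_dyadic_pow_mul_le_lt hd (Nat.pos_of_ne_zero hn)
    (Nat.pos_of_ne_zero hM) hN
  set A := (m * 2 ^ k) ^ d * n
  have hN0 : 0 < (N : ℝ) := by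
    exact_mod_cast (show 0 < M ^ d * n by positivity).trans_le hN
  have one_le_pow : 1 ≤ (1 + 1 / (M : ℝ)) ^ d := one_le_pow₀ (by simp)
  have cut : b N ≤ b A + E * (((1 + 1 / (M : ℝ)) ^ d - 1) * N) ^ α := by
    rcases hle.eq_or_lt with hAN | hAN
    · rw [← hAN]
      have : 0 ≤ ((1 + 1 / (M : ℝ)) ^ d - 1) * A := mul_nonneg (by linarith) (by positivity)
      exact le_add_of_nonneg_right (by positivity)
    · calc b N = b (A + (N - A)) := by rw [Nat.add_sub_cancel' hle]
        _ ≤ b A + E * ((N - A : ℕ) : ℝ) ^ α :=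
          (hbs _ _).trans (by gcongr; exact hbE _ (Nat.sub_pos_of_lt hAN).ne')
        _ ≤ _ := by
          gcongr
          exact sub_le_mul_of_dyadic hM hMm hle hlt
  calc b N / (N : ℝ) ^ α
      ≤ b A / (N : ℝ) ^ α + E * ((1 + 1 / (M : ℝ)) ^ d - 1) ^ α := by
        rw [Real.mul_rpow (by linarith) hN0.le, ← mul_assoc] at cut
        rw [div_add' _ _ _ (by positivity)]
        gcongr
    _ ≤ b n / (n : ℝ) ^ α + C * m ^ d * ((n : ℝ) ^ γ / (n : ℝ) ^ α) +
          E * ((1 + 1 / (M : ℝ)) ^ d - 1) ^ α := by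
        gcongr
        exact div_rpow_le_of_dyadic hb0 hα hC hb2 hb (by omega) hn hle
    _ ≤ _ := by
        gcongr
        exact_mod_cast hmM.le

lemma exists_tendsto_div_rpow_of_subadditive_of_le {b : ℕ → ℝ} (hb0 : ∀ n, 0 ≤ b n)
    (hbs : Subadditive b) {d : ℕ} (hd : d ≠ 0) {α γ C : ℝ} (hα : 0 < α) (hγα : γ < α)
    (hC : 0 ≤ C) (hb2 : ∀ n, b (2 ^ d * n) ≤ ((2 ^ d : ℕ) : ℝ) ^ α * b n)
    (hb : ∀ m n, m ≠ 0 → b (m ^ d * n) ≤ ((m : ℝ) ^ d) ^ α * b n + C * m ^ d * (n : ℝ) ^ γ) :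
    ∃ β, Tendsto (fun n : ℕ => b n / (n : ℝ) ^ α) atTop (nhds β) := by
  obtain ⟨E, hE, hbE⟩ := exists_le_mul_rpow_of_subadditive hbs
    (Nat.le_self_pow hd 2) hα hb2
  refine exists_tendsto_of_eventually_le_add ⟨0, ?_⟩ fun ε hε => ?_
  · rintro _ ⟨n, rfl⟩
    exact div_nonneg (hb0 n) (by positivity)
  have tendsto_tail : Tendsto (fun M : ℕ => E * ((1 + 1 / (M : ℝ)) ^ d - 1) ^ α) atTop
      (nhds 0) := by
    have hinv := ((tendsto_one_div_atTop_nhds_zero_nat (𝕜 := ℝ)).const_add 1).pow d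
    simpa [hα.ne'] using
      ((hinv.sub_const 1).rpow_const (Or.inr hα.le)).const_mul E
  obtain ⟨M, hM, hMε⟩ :=
    ((eventually_ne_atTop 0).and (tendsto_tail.eventually_le_const (half_pos hε))).exists
  have tendsto_error : Tendsto (fun n : ℕ => C * (2 * M) ^ d * ((n : ℝ) ^ γ / (n : ℝ) ^ α)) atTop
      (nhds 0) := by
    simpa using (tendsto_rpow_div_rpow hγα).const_mul (C * (2 * (M : ℝ)) ^ d)
  filter_upwards [eventually_ne_atTop 0, tendsto_error.eventually_le_const (half_pos hε)]
    with n hn hnε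
  filter_upwards [eventually_ge_atTop (M ^ d * n)] with N hN
  linarith [div_rpow_le_div_rpow_add hb0 hbs hd hα.le hC hE hbE hb2 hb hM hn hN]

theorem exists_tendsto_div_rpow_of_subadditive {u : ℕ → ℝ} (hu0 : ∀ n, 0 ≤ u n)
    (hus : Subadditive u) {d : ℕ} (hd : d ≠ 0) {α γ C : ℝ} (hγ0 : 0 ≤ γ) (hγ1 : γ ≤ 1)
    (hγα : γ < α) (hC : 0 ≤ C)
    (hu : ∀ m n, m ≠ 0 → u (m ^ d * n) ≤ ((m : ℝ) ^ d) ^ α * u n + C * m ^ d * (n : ℝ) ^ γ) :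
    ∃ β, Tendsto (fun n : ℕ => u n / (n : ℝ) ^ α) atTop (nhds β) := by
  have two_pow_lt : ((2 : ℝ) ^ d) ^ γ < ((2 : ℝ) ^ d) ^ α :=
    Real.rpow_lt_rpow_of_exponent_lt (one_lt_pow₀ one_lt_two hd) hγα
  -- With this `B`, adding `B * n ^ γ` to `u n` absorbs the error term of `hu` for `m = 2`.
  set B := C * 2 ^ d / (((2 : ℝ) ^ d) ^ α - ((2 : ℝ) ^ d) ^ γ)
  have hB : 0 ≤ B := div_nonneg (by positivity) (by linarith)
  have B_mul : B * (((2 : ℝ) ^ d) ^ α - ((2 : ℝ) ^ d) ^ γ) = C * 2 ^ d :=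
    div_mul_cancel₀ _ (by linarith)
  let b (n : ℕ) : ℝ := u n + B * (n : ℝ) ^ γ
  have cast_rpow (m n : ℕ) :
      ((m ^ d * n : ℕ) : ℝ) ^ γ = ((m : ℝ) ^ d) ^ γ * (n : ℝ) ^ γ := by
    push_cast
    exact Real.mul_rpow (by positivity) (by positivity)
  have hb0 (n : ℕ) : 0 ≤ b n := add_nonneg (hu0 n) (by positivity)
  have hbs : Subadditive b := fun m n => by
    have hpow := mul_le_mul_of_nonneg_left
      (Real.rpow_add_le_add_rpow (Nat.cast_nonneg m) (Nat.cast_nonneg n) hγ0 hγ1) hB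
    simp only [b, Nat.cast_add]
    linarith [hus m n]
  have hb2 (n : ℕ) : b (2 ^ d * n) ≤ ((2 ^ d : ℕ) : ℝ) ^ α * b n := by
    have hu2 := hu 2 n two_ne_zero
    simp only [b, cast_rpow]
    push_cast at hu2 ⊢
    linear_combination hu2 - (n : ℝ) ^ γ * B_mul
  have hb (m n : ℕ) (hm : m ≠ 0) :
      b (m ^ d * n) ≤ ((m : ℝ) ^ d) ^ α * b n + C * m ^ d * (n : ℝ) ^ γ := by
    have pow_le : ((m : ℝ) ^ d) ^ γ ≤ ((m : ℝ) ^ d) ^ α :=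
      Real.rpow_le_rpow_of_exponent_le
        (one_le_pow₀ (by exact_mod_cast Nat.one_le_iff_ne_zero.2 hm)) hγα.le
    have hmul : B * (((m : ℝ) ^ d) ^ γ * (n : ℝ) ^ γ) ≤ B * (((m : ℝ) ^ d) ^ α * (n : ℝ) ^ γ) := by
      gcongr
    simp only [b, cast_rpow]
    linarith [hu m n hm]
  obtain ⟨β, hβ⟩ := exists_tendsto_div_rpow_of_subadditive_of_le hb0 hbs hd (hγ0.trans_lt hγα) hγα
    hC hb2 hb
  refine ⟨β, ?_⟩
  simpa [b, add_div, mul_div_assoc] using hβ.sub ((tendsto_rpow_div_rpow hγα).const_mul B)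

end AlmostHomogeneous

section Cube

variable {d : ℕ}

lemma unitCube_eq_preimage_Icc :
    unitCube d = (WithLp.ofLp : EuclideanSpace ℝ (Fin d) → _) ⁻¹' Set.Icc 0 1 := by
  ext x
  simp [unitCube, Pi.le_def, forall_and]

lemma measurableSet_unitCube : MeasurableSet (unitCube d) := by
  rw [unitCube_eq_preimage_Icc]
  exact (PiLp.volume_preserving_ofLp (Fin d)).measurable measurableSet_Icc

instance : IsProbabilityMeasure (unifCube d) where
  measure_univ := by
    rw [unifCube, Measure.restrict_apply_univ, unitCube_eq_preimage_Icc,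
      (PiLp.volume_preserving_ofLp (Fin d)).measure_preimage measurableSet_Icc.nullMeasurableSet,
      Real.volume_Icc_pi]
    simp

lemma ae_mem_unitCube : ∀ᵐ x ∂unifCube d, x ∈ unitCube d :=
  ae_restrict_mem measurableSet_unitCube

/-- The cube `[0,1)^d`. It differs from the unit cube by a null set, and unlike the latter it is
partitioned by the translates of its homothetic copies. -/
def halfOpenCube (d : ℕ) : Set (EuclideanSpace ℝ (Fin d)) :=
  {x | ∀ i, x i ∈ Set.Ico (0 : ℝ) 1}

lemma halfOpenCube_subset_unitCube : halfOpenCube d ⊆ unitCube d :=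
  fun _ hx i => Set.Ico_subset_Icc_self (hx i)

lemma unifCube_eq_restrict_halfOpenCube : unifCube d = volume.restrict (halfOpenCube d) := by
  have preimage_Ico : halfOpenCube d = (WithLp.ofLp : EuclideanSpace ℝ (Fin d) → _) ⁻¹'
      Set.univ.pi fun i => Set.Ico ((0 : Fin d → ℝ) i) ((1 : Fin d → ℝ) i) := by
    ext x
    simp [halfOpenCube]
  rw [unifCube, unitCube_eq_preimage_Icc, preimage_Ico]
  exact Measure.restrict_congr_set
    ((PiLp.volume_preserving_ofLp (Fin d)).quasiMeasurePreserving.preimage_ae_eq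
      Measure.univ_pi_Ico_ae_eq_Icc).symm

/-- The retraction of `ℝ^d` onto the unit cube that truncates every coordinate to `[0, 1]`. -/
noncomputable def clampCube (x : EuclideanSpace ℝ (Fin d)) : EuclideanSpace ℝ (Fin d) :=
  WithLp.toLp 2 fun i => max 0 (min 1 (x i))

lemma clampCube_mem_unitCube (x : EuclideanSpace ℝ (Fin d)) : clampCube x ∈ unitCube d :=
  fun i => by simp [clampCube]

lemma clampCube_of_mem {x : EuclideanSpace ℝ (Fin d)} (hx : x ∈ unitCube d) : clampCube x = x := by
  ext i
  simp [clampCube, (hx i).1, (hx i).2]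

lemma continuous_clampCube :
    Continuous (clampCube : EuclideanSpace ℝ (Fin d) → EuclideanSpace ℝ (Fin d)) := by
  unfold clampCube
  fun_prop

/-- The Euclidean distance between the truncations of two points to the unit cube. It agrees with
the distance on the cube, and it is bounded on the whole space, as `IsBoundedCost` requires. -/
noncomputable def cubeDist (x y : EuclideanSpace ℝ (Fin d)) : ℝ :=
  dist (clampCube x) (clampCube y)

lemma dist_le_sqrt_of_mem_unitCube {x y : EuclideanSpace ℝ (Fin d)} (hx : x ∈ unitCube d)
    (hy : y ∈ unitCube d) : dist x y ≤ √d := by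
  rw [EuclideanSpace.dist_eq]
  refine Real.sqrt_le_sqrt ?_
  calc ∑ i, dist (x i) (y i) ^ 2 ≤ ∑ _i : Fin d, (1 : ℝ) :=
        Finset.sum_le_sum fun i _ =>
          pow_le_one₀ dist_nonneg (Real.dist_le_of_mem_Icc_01 (hx i) (hy i))
    _ = d := by simp

lemma isBoundedCost_cubeDist : IsBoundedCost (cubeDist (d := d)) (NNReal.sqrt d) where
  measurable := ((continuous_clampCube.comp continuous_fst).dist
    (continuous_clampCube.comp continuous_snd)).measurable
  nonneg _ _ := dist_nonneg
  le u v := by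
    simpa [cubeDist] using
      dist_le_sqrt_of_mem_unitCube (clampCube_mem_unitCube u) (clampCube_mem_unitCube v)

lemma ae_LMBM_eq_minMatchingCost_cubeDist {Ω : Type*} [MeasurableSpace Ω] {P : Measure Ω}
    {X Y : ℕ → Ω → EuclideanSpace ℝ (Fin d)} (hm : ∀ n, Measurable (Sum.elim X Y n))
    (hl : ∀ n, P.map (Sum.elim X Y n) = unifCube d) :
    ∀ᵐ ω ∂P, ∀ N : ℕ, LMBM (fun i : Fin N => X i ω) (fun j : Fin N => Y j ω) =
      minMatchingCost cubeDist (fun i : Fin N => X i ω) (fun i : Fin N => Y i ω) := by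
  have ae_clampCube : ∀ᵐ ω ∂P, ∀ n, clampCube (Sum.elim X Y n ω) = Sum.elim X Y n ω :=
    ae_all_iff.2 fun n => (ae_of_ae_map (hm n).aemeasurable
      ((hl n).symm ▸ ae_mem_unitCube)).mono fun _ => clampCube_of_mem
  filter_upwards [ae_clampCube] with ω hω N
  have hX (i : ℕ) : clampCube (X i ω) = X i ω := hω (Sum.inl i)
  have hY (i : ℕ) : clampCube (Y i ω) = Y i ω := hω (Sum.inr i)
  simp only [LMBM_eq_minMatchingCost, minMatchingCost, cubeDist, hX, hY]

end Cube

section Subcubes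

variable {d m : ℕ}

/-- The subcube with corner `k / m` of the partition of `[0,1)^d` into `m ^ d` cubes of side
`1 / m`. -/
def subcube (k : Fin d → Fin m) : Set (EuclideanSpace ℝ (Fin d)) :=
  {x | ∀ i, ⌊m * x i⌋ = (k i : ℤ)}

lemma measurableSet_subcube (k : Fin d → Fin m) : MeasurableSet (subcube k) := by
  simp only [subcube, Set.ofPred_forall]
  exact MeasurableSet.iInter fun i =>
    (by fun_prop : Measurable fun x : EuclideanSpace ℝ (Fin d) => ⌊m * x i⌋)
      (measurableSet_singleton _)

lemma pairwise_disjoint_subcube :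
    Pairwise (Function.onFun Disjoint (subcube : (Fin d → Fin m) → _)) := by
  refine fun k l hkl => Set.disjoint_left.2 fun x hk hl => hkl (funext fun i => Fin.ext ?_)
  exact_mod_cast (hk i).symm.trans (hl i)

lemma iUnion_subcube [NeZero m] : ⋃ k : Fin d → Fin m, subcube k = halfOpenCube d := by
  have hm : (0 : ℝ) < m := Nat.cast_pos.2 (NeZero.pos m)
  ext x
  simp only [Set.mem_iUnion, subcube, halfOpenCube, Set.mem_ofPred_eq]
  rw [← Classical.skolem (p := fun i (j : Fin m) => ⌊m * x i⌋ = ((j : ℕ) : ℤ))]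
  refine forall_congr' fun i => ?_
  calc (∃ j : Fin m, ⌊m * x i⌋ = ((j : ℕ) : ℤ)) ↔ 0 ≤ ⌊m * x i⌋ ∧ ⌊m * x i⌋ < m :=
        ⟨fun ⟨j, hj⟩ => by omega, fun h => ⟨⟨⌊m * x i⌋.toNat, by omega⟩, by simp [h.1]⟩⟩
    _ ↔ x i ∈ Set.Ico (0 : ℝ) 1 := by
        rw [Int.floor_nonneg, Int.floor_lt, Int.cast_natCast, mul_nonneg_iff_of_pos_left hm,
          mul_lt_iff_lt_one_right hm, Set.mem_Ico]

/-- The homothety of the unit cube onto the closure of `subcube k`, precomposed with the retraction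
onto the unit cube. -/
noncomputable def subcubeMap (k : Fin d → Fin m) (u : EuclideanSpace ℝ (Fin d)) :
    EuclideanSpace ℝ (Fin d) :=
  (m : ℝ)⁻¹ • (clampCube u + WithLp.toLp 2 fun i => ((k i : ℕ) : ℝ))

lemma subcubeMap_mem_unitCube (k : Fin d → Fin m) (u : EuclideanSpace ℝ (Fin d)) :
    subcubeMap k u ∈ unitCube d := by
  intro i
  obtain ⟨h0, h1⟩ := clampCube_mem_unitCube u i
  have hk : ((k i : ℕ) : ℝ) + 1 ≤ m := by exact_mod_cast (k i).2
  have apply_i : subcubeMap k u i = (clampCube u i + (k i : ℕ)) / m := by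
    simp [subcubeMap, div_eq_inv_mul, mul_add]
  rw [apply_i]
  exact ⟨by positivity, div_le_one_of_le₀ (by linarith) (Nat.cast_nonneg m)⟩

lemma cubeDist_subcubeMap (k : Fin d → Fin m) (u v : EuclideanSpace ℝ (Fin d)) :
    cubeDist (subcubeMap k u) (subcubeMap k v) = (m : ℝ)⁻¹ * cubeDist u v := by
  rw [cubeDist, clampCube_of_mem (subcubeMap_mem_unitCube k u),
    clampCube_of_mem (subcubeMap_mem_unitCube k v), subcubeMap, subcubeMap, dist_smul₀,
    dist_add_right, norm_inv, Real.norm_natCast, cubeDist]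

lemma continuous_subcubeMap (k : Fin d → Fin m) : Continuous (subcubeMap k) :=
  (continuous_clampCube.add continuous_const).const_smul (m : ℝ)⁻¹

lemma subcubeMap_preimage_inter_halfOpenCube [NeZero m] (k : Fin d → Fin m)
    (A : Set (EuclideanSpace ℝ (Fin d))) :
    subcubeMap k ⁻¹' A ∩ halfOpenCube d =
      (· + WithLp.toLp 2 fun i => ((k i : ℕ) : ℝ)) ⁻¹' (((m : ℝ)⁻¹ • ·) ⁻¹' (A ∩ subcube k)) := by
  have hm : (m : ℝ) ≠ 0 := Nat.cast_ne_zero.2 (NeZero.ne m)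
  ext u
  have mem_subcube :
      (m : ℝ)⁻¹ • (u + WithLp.toLp 2 fun i => ((k i : ℕ) : ℝ)) ∈ subcube k ↔
        u ∈ halfOpenCube d := by
    simp [subcube, halfOpenCube, ← mul_add, mul_inv_cancel_left₀ hm, Int.floor_eq_zero_iff]
  simp only [Set.mem_inter_iff, Set.mem_preimage, mem_subcube]
  exact and_congr_left fun hu => by
    rw [subcubeMap, clampCube_of_mem (halfOpenCube_subset_unitCube hu)]

lemma unifCube_preimage_subcubeMap [NeZero m] (k : Fin d → Fin m)
    {A : Set (EuclideanSpace ℝ (Fin d))} (hA : MeasurableSet A) :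
    unifCube d (subcubeMap k ⁻¹' A) = (m : ENNReal) ^ d * volume (A ∩ subcube k) := by
  have hm : (m : ℝ) ≠ 0 := Nat.cast_ne_zero.2 (NeZero.ne m)
  rw [unifCube_eq_restrict_halfOpenCube,
    Measure.restrict_apply ((continuous_subcubeMap k).measurable hA),
    subcubeMap_preimage_inter_halfOpenCube, measure_preimage_add_right,
    Measure.addHaar_preimage_smul _ (inv_ne_zero hm), finrank_euclideanSpace, Fintype.card_fin,
    inv_pow, inv_inv, abs_of_nonneg (by positivity), ENNReal.ofReal_pow (Nat.cast_nonneg m),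
    ENNReal.ofReal_natCast]

lemma measurePreserving_subcubeMap [NeZero m] :
    MeasurePreserving (fun p : (Fin d → Fin m) × EuclideanSpace ℝ (Fin d) => subcubeMap p.1 p.2)
      ((uniformOn Set.univ).prod (unifCube d)) (unifCube d) := by
  have measurable_map : Measurable
      fun p : (Fin d → Fin m) × EuclideanSpace ℝ (Fin d) => subcubeMap p.1 p.2 :=
    measurable_from_prod_countable_right fun k => (continuous_subcubeMap k).measurable
  refine ⟨measurable_map, Measure.ext fun A hA => ?_⟩
  have hcard : ((m : ENNReal) ^ d)⁻¹ * (m : ENNReal) ^ d = 1 :=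
    ENNReal.inv_mul_cancel (pow_ne_zero _ (Nat.cast_ne_zero.2 (NeZero.ne m))) (by finiteness)
  rw [Measure.map_apply measurable_map hA, Measure.prod_apply (measurable_map hA)]
  calc ∫⁻ k, unifCube d (subcubeMap k ⁻¹' A) ∂uniformOn (Set.univ : Set (Fin d → Fin m))
      = ((m : ENNReal) ^ d)⁻¹ * ∑ k : Fin d → Fin m, m ^ d * volume (A ∩ subcube k) := by
        simp [uniformOn, ProbabilityTheory.cond, lintegral_smul_measure, lintegral_count,
          unifCube_preimage_subcubeMap _ hA]
    _ = ∑ k : Fin d → Fin m, volume (A ∩ subcube k) := by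
        rw [← Finset.mul_sum, ← mul_assoc, hcard, one_mul]
    _ = volume (⋃ k : Fin d → Fin m, A ∩ subcube k) := by
        rw [measure_iUnion (fun k l hkl => (pairwise_disjoint_subcube hkl).mono
          Set.inter_subset_right Set.inter_subset_right)
          fun k => hA.inter (measurableSet_subcube k), tsum_fintype]
    _ = unifCube d A := by
        rw [← Set.inter_iUnion, iUnion_subcube, unifCube_eq_restrict_halfOpenCube,
          Measure.restrict_apply hA]

lemma pow_rpow_one_sub_one_div (hd : d ≠ 0) (hm : m ≠ 0) :
    ((m : ℝ) ^ d) ^ (1 - 1 / (d : ℝ)) = m ^ d * (m : ℝ)⁻¹ := by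
  have hm0 : (0 : ℝ) < m := Nat.cast_pos.2 (Nat.pos_of_ne_zero hm)
  rw [← Real.rpow_natCast, ← Real.rpow_mul hm0.le, mul_sub, mul_one,
    mul_one_div_cancel (Nat.cast_ne_zero.2 hd), Real.rpow_sub hm0, Real.rpow_one, div_eq_mul_inv]

lemma meanMatchingCost_cubeDist_pow_mul_le (hd : d ≠ 0) (hm : m ≠ 0) (n : ℕ) :
    meanMatchingCost (unifCube d) cubeDist (m ^ d * n) ≤
      ((m : ℝ) ^ d) ^ (1 - 1 / (d : ℝ)) * meanMatchingCost (unifCube d) cubeDist n +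
        2 * √d * m ^ d * (n : ℝ) ^ (1 / 2 : ℝ) := by
  have : NeZero m := ⟨hm⟩
  rw [pow_rpow_one_sub_one_div hd hm, ← Real.sqrt_eq_rpow]
  simpa using isBoundedCost_cubeDist.meanMatchingCost_card_mul_le
    (fun k u v => (cubeDist_subcubeMap (m := m) k u v).le) measurePreserving_subcubeMap n

end Subcubes

section MeanCubeCost

variable {d : ℕ}

lemma unifCube_real_cubeDist_lt_le (u : EuclideanSpace ℝ (Fin d)) {r : ℝ} (hr : 0 < r) :
    (unifCube d).real {v | cubeDist u v < r} ≤
      volume.real (Metric.ball (0 : EuclideanSpace ℝ (Fin d)) 1) * r ^ d := by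
  have measure_le : unifCube d {v | cubeDist u v < r} ≤ volume (Metric.ball (clampCube u) r) := by
    refine (measure_mono_ae ?_).trans (Measure.restrict_apply_le (unitCube d) _)
    filter_upwards [ae_mem_unitCube] with v hv (hlt : dist (clampCube u) (clampCube v) < r)
    rwa [clampCube_of_mem hv, dist_comm] at hlt
  calc (unifCube d).real {v | cubeDist u v < r} ≤ volume.real (Metric.ball (clampCube u) r) :=
        ENNReal.toReal_mono measure_ball_lt_top.ne measure_le
    _ = _ := by
        rw [measureReal_def, Measure.addHaar_ball_of_pos _ _ hr, finrank_euclideanSpace,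
          Fintype.card_fin, ENNReal.toReal_mul, ENNReal.toReal_ofReal (by positivity), mul_comm,
          measureReal_def]

lemma exists_pos_mul_rpow_le_meanMatchingCost_cubeDist (hd : d ≠ 0) :
    ∃ c > 0, ∀ n : ℕ, n ≠ 0 →
      c * (n : ℝ) ^ (1 - 1 / (d : ℝ)) ≤ meanMatchingCost (unifCube d) cubeDist n := by
  set B := volume.real (Metric.ball (0 : EuclideanSpace ℝ (Fin d)) 1)
  have hB : 0 < B :=
    ENNReal.toReal_pos (Metric.measure_ball_pos _ _ one_pos).ne' measure_ball_lt_top.ne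
  refine ⟨1 / 2 * (2 * B)⁻¹ ^ (1 / (d : ℝ)), by positivity, fun n hn => ?_⟩
  have hn0 : (0 : ℝ) < n := Nat.cast_pos.2 (Nat.pos_of_ne_zero hn)
  -- At this radius a point lies within `r` of `u` with probability at most `1 / (2 * n)`.
  set r : ℝ := ((2 * B)⁻¹ * (n : ℝ)⁻¹) ^ (1 / (d : ℝ)) with hr
  have hrd : r ^ d = (2 * B)⁻¹ * (n : ℝ)⁻¹ := by
    rw [hr, one_div]
    exact Real.rpow_inv_natCast_pow (by positivity) hd
  calc 1 / 2 * (2 * B)⁻¹ ^ (1 / (d : ℝ)) * (n : ℝ) ^ (1 - 1 / (d : ℝ))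
      = r * (n - n ^ 2 * (1 / (2 * n))) := by
        rw [hr, Real.mul_rpow (by positivity) (by positivity), Real.inv_rpow hn0.le,
          Real.rpow_sub hn0, Real.rpow_one]
        field_simp
        ring
    _ ≤ meanMatchingCost (unifCube d) cubeDist n := by
        refine isBoundedCost_cubeDist.mul_sub_sq_mul_le_meanMatchingCost (by positivity)
          (fun u => (unifCube_real_cubeDist_lt_le u (by positivity)).trans_eq ?_) n
        rw [hrd]
        change B * _ = _
        field_simp

lemma half_lt_one_sub_one_div (hd : 3 ≤ d) : (1 / 2 : ℝ) < 1 - 1 / (d : ℝ) := by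
  have hd' : (3 : ℝ) ≤ d := by exact_mod_cast hd
  linarith [one_div_le_one_div_of_le three_pos hd']

lemma exists_pos_tendsto_meanMatchingCost_cubeDist_div_rpow (hd : 3 ≤ d) :
    ∃ β > 0, Tendsto
      (fun n : ℕ => meanMatchingCost (unifCube d) cubeDist n / (n : ℝ) ^ (1 - 1 / (d : ℝ)))
      atTop (nhds β) := by
  have hd0 : d ≠ 0 := by omega
  obtain ⟨β, hβ⟩ := exists_tendsto_div_rpow_of_subadditive
    (meanMatchingCost_nonneg isBoundedCost_cubeDist.nonneg)
    isBoundedCost_cubeDist.subadditive_meanMatchingCost hd0 one_half_pos.le one_half_lt_one.le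
    (half_lt_one_sub_one_div hd) (by positivity)
    fun m n hm => meanMatchingCost_cubeDist_pow_mul_le hd0 hm n
  obtain ⟨c, hc, hcn⟩ := exists_pos_mul_rpow_le_meanMatchingCost_cubeDist hd0
  refine ⟨β, hc.trans_le (ge_of_tendsto hβ ?_), hβ⟩
  filter_upwards [eventually_ne_atTop 0] with n hn
  have : (0 : ℝ) < n := Nat.cast_pos.2 (Nat.pos_of_ne_zero hn)
  exact (le_div_iff₀ (by positivity)).2 (hcn n hn)

end MeanCubeCost

theorem almost_sure_convergence_MBM
    (d : ℕ) (hd : 3 ≤ d)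
    (Ω : Type*) [MeasureSpace Ω] [IsProbabilityMeasure (ℙ : Measure Ω)]
    (X Y : ℕ → Ω → EuclideanSpace ℝ (Fin d))
    (hmeas : ∀ n, Measurable (Sum.elim X Y n))
    (hindep : iIndepFun (Sum.elim X Y) ℙ)
    (hunif : ∀ n, Measure.map (Sum.elim X Y n) ℙ = unifCube d) :
    ∃ β : ℝ, 0 < β ∧
      ∀ᵐ ω ∂(ℙ : Measure Ω),
        Tendsto
          (fun N : ℕ =>
            LMBM (fun i : Fin N => X i ω) (fun j : Fin N => Y j ω) /
              (N : ℝ) ^ (1 - 1 / (d : ℝ)))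
          atTop (nhds β) := by
  have sqrt_pos : 0 < NNReal.sqrt d := NNReal.sqrt_pos.2 (Nat.cast_pos.2 (by omega))
  obtain ⟨β, hβ, mean_tendsto⟩ := exists_pos_tendsto_meanMatchingCost_cubeDist_div_rpow hd
  refine ⟨β, hβ, ?_⟩
  filter_upwards [ae_LMBM_eq_minMatchingCost_cubeDist hmeas hunif,
    isBoundedCost_cubeDist.ae_tendsto_minMatchingCost_sub_mean_div_rpow sqrt_pos hmeas hindep hunif
      (half_lt_one_sub_one_div hd)] with ω cost_eq fluctuation_tendsto
  have cost_tendsto := fluctuation_tendsto.add mean_tendsto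
  rw [zero_add] at cost_tendsto
  refine cost_tendsto.congr fun N => ?_
  rw [cost_eq N]
  ring
end

section
/- Let Q ⊂ ℝ^d be a cube with edge length a, and let X₁,…,X_{N₁} and Y₁,…,Y_{N₂} be points of Q. Divide Q into 2^d disjoint congruent subcubes Q_p (p = 1,…,2^d) of edge length a/2. For each p, let n_{1,p} and n_{2,p} be the numbers of X-points and Y-points lying in Q_p, and let L_p be the length of an optimal partial bipartite matching of the X-points and Y-points in Q_p (matching min(n_{1,p}, n_{2,p}) pairs). Then L_MBM(X₁,…,X_{N₁}; Y₁,…,Y_{N₂}) ≤ Σ_{p=1}^{2^d} L_p + (a√d / 2) Σ_{p=1}^{2^d} |n_{1,p} − n_{2,p}|. -/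
open MeasureTheory ProbabilityTheory Filter

/-!
Optimal matchings in the cells of a partition of the points combine to a partial matching with
`∑ₚ min n₁ₚ n₂ₚ` pairs. Extending it to one with `min N₁ N₂` pairs costs at most the diameter
`a √d` of the cube per new pair. Since `2 min u v = u + v - |u - v|` and
`2 min N₁ N₂ ≤ N₁ + N₂`, the number of new pairs is at most `½ ∑ₚ |n₁ₚ - n₂ₚ|`.
-/

section PartialMatching

open Finset

variable {α β : Type*}

theorem injOn_biUnion_of_fiberwise {γ P : Type*} [DecidableEq γ] {s : Finset P}
    {M : P → Finset γ} {φ : γ → α} {f : α → P} (hf : ∀ p ∈ s, ∀ e ∈ M p, f (φ e) = p)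
    (hinj : ∀ p ∈ s, Set.InjOn φ (M p)) : Set.InjOn φ (s.biUnion M) := by
  intro e he e' he' hee'
  obtain ⟨p, hp, hep⟩ := mem_biUnion.1 he
  obtain ⟨q, hq, heq⟩ := mem_biUnion.1 he'
  obtain rfl : p = q := by rw [← hf p hp e hep, hee', hf q hq e' heq]
  exact hinj p hp hep heq hee'

/-- A partial bipartite matching between `A` and `B`, encoded as the finite set of its pairs: no
point of `A` and no point of `B` occurs in two pairs. -/
structure IsPartialMatching (A : Finset α) (B : Finset β) (M : Finset (α × β)) : Prop where
  fst_mem : ∀ e ∈ M, e.1 ∈ A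
  snd_mem : ∀ e ∈ M, e.2 ∈ B
  injOn_fst : Set.InjOn Prod.fst (M : Set (α × β))
  injOn_snd : Set.InjOn Prod.snd (M : Set (α × β))

namespace IsPartialMatching

variable {A : Finset α} {B : Finset β} {M : Finset (α × β)}

theorem empty (A : Finset α) (B : Finset β) : IsPartialMatching A B ∅ := by
  constructor <;> simp

theorem insert [DecidableEq α] [DecidableEq β] (hM : IsPartialMatching A B M) {a : α} {b : β}
    (ha : a ∈ A) (hb : b ∈ B) (haM : a ∉ M.image Prod.fst) (hbM : b ∉ M.image Prod.snd) :
    IsPartialMatching A B (insert (a, b) M) where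
  fst_mem := by simpa [ha] using hM.fst_mem
  snd_mem := by simpa [hb] using hM.snd_mem
  injOn_fst := by
    rw [coe_insert, Set.injOn_insert fun h => haM (mem_image_of_mem _ h)]
    exact ⟨hM.injOn_fst, by simpa using haM⟩
  injOn_snd := by
    rw [coe_insert, Set.injOn_insert fun h => hbM (mem_image_of_mem _ h)]
    exact ⟨hM.injOn_snd, by simpa using hbM⟩

theorem card_le_min (hM : IsPartialMatching A B M) : #M ≤ min #A #B :=
  le_min (card_le_card_of_injOn _ hM.fst_mem hM.injOn_fst)
    (card_le_card_of_injOn _ hM.snd_mem hM.injOn_snd)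

theorem exists_superset_card_eq (hM : IsPartialMatching A B M) {n : ℕ} (hMn : #M ≤ n)
    (hn : n ≤ min #A #B) : ∃ N, M ⊆ N ∧ IsPartialMatching A B N ∧ #N = n := by
  classical
  induction n, hMn using Nat.le_induction with
  | base => exact ⟨M, Subset.rfl, hM, rfl⟩
  | succ n _ ih =>
    obtain ⟨N, hMN, hN, rfl⟩ := ih (by lia)
    obtain ⟨a, haA, haN⟩ : ∃ a ∈ A, a ∉ N.image Prod.fst :=
      exists_mem_notMem_of_card_lt_card (card_image_le.trans_lt (by lia))
    obtain ⟨b, hbB, hbN⟩ : ∃ b ∈ B, b ∉ N.image Prod.snd :=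
      exists_mem_notMem_of_card_lt_card (card_image_le.trans_lt (by lia))
    exact ⟨_, hMN.trans (subset_insert _ _), hN.insert haA hbB haN hbN,
      card_insert_of_notMem fun h => haN (mem_image_of_mem _ h)⟩

theorem exists_card_eq_min_sum_le {R : Type*} [Ring R] [PartialOrder R] [IsOrderedRing R]
    (hM : IsPartialMatching A B M) {w : α → β → R} {D : R} (hw : ∀ i ∈ A, ∀ j ∈ B, w i j ≤ D) :
    ∃ N, IsPartialMatching A B N ∧ #N = min #A #B ∧
      ∑ e ∈ N, w e.1 e.2 ≤ ∑ e ∈ M, w e.1 e.2 + ((min #A #B : ℕ) - #M : R) * D := by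
  classical
  obtain ⟨N, hMN, hN, hcard⟩ := hM.exists_superset_card_eq hM.card_le_min le_rfl
  refine ⟨N, hN, hcard, ?_⟩
  have hnew : ∑ e ∈ N \ M, w e.1 e.2 ≤ #(N \ M) • D := sum_le_card_nsmul _ _ _ fun e he =>
    have heN := (mem_sdiff.1 he).1
    hw _ (hN.fst_mem e heN) _ (hN.snd_mem e heN)
  rw [← sum_sdiff hMN, add_comm, ← hcard, ← cast_card_sdiff hMN, ← nsmul_eq_mul]
  gcongr

section Fiberwise

variable {P : Type*} [DecidableEq P] {s : Finset P} {f : α → P} {g : β → P}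
  {M : P → Finset (α × β)}

theorem pairwiseDisjoint_of_fiberwise
    (hM : ∀ p ∈ s, IsPartialMatching {i ∈ A | f i = p} {j ∈ B | g j = p} (M p)) :
    (s : Set P).PairwiseDisjoint M := by
  intro p hp q hq hpq
  refine disjoint_left.2 fun e hep heq => hpq ?_
  rw [← (mem_filter.1 ((hM p hp).fst_mem e hep)).2, (mem_filter.1 ((hM q hq).fst_mem e heq)).2]

theorem biUnion_of_fiberwise [DecidableEq α] [DecidableEq β]
    (hM : ∀ p ∈ s, IsPartialMatching {i ∈ A | f i = p} {j ∈ B | g j = p} (M p)) :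
    IsPartialMatching A B (s.biUnion M) := by
  have hfst : ∀ p ∈ s, ∀ e ∈ M p, e.1 ∈ A ∧ f e.1 = p := fun p hp e he =>
    mem_filter.1 ((hM p hp).fst_mem e he)
  have hsnd : ∀ p ∈ s, ∀ e ∈ M p, e.2 ∈ B ∧ g e.2 = p := fun p hp e he =>
    mem_filter.1 ((hM p hp).snd_mem e he)
  refine ⟨fun e he => ?_, fun e he => ?_, ?_, ?_⟩
  · obtain ⟨p, hp, hep⟩ := mem_biUnion.1 he
    exact (hfst p hp e hep).1
  · obtain ⟨p, hp, hep⟩ := mem_biUnion.1 he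
    exact (hsnd p hp e hep).1
  · exact injOn_biUnion_of_fiberwise (fun p hp e he => (hfst p hp e he).2)
      fun p hp => (hM p hp).injOn_fst
  · exact injOn_biUnion_of_fiberwise (fun p hp e he => (hsnd p hp e he).2)
      fun p hp => (hM p hp).injOn_snd

end Fiberwise

end IsPartialMatching

theorem min_sum_le_sum_min_add_half_sum_abs_sub {P K : Type*} [Field K] [LinearOrder K]
    [IsStrictOrderedRing K] (s : Finset P) (u v : P → K) :
    min (∑ p ∈ s, u p) (∑ p ∈ s, v p) ≤
      ∑ p ∈ s, min (u p) (v p) + (∑ p ∈ s, |u p - v p|) / 2 := by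
  have hmin : ∀ p, min (u p) (v p) + |u p - v p| / 2 = (u p + v p) / 2 := fun p => by
    rcases le_total (u p) (v p) with h | h
    · rw [min_eq_left h, abs_of_nonpos (sub_nonpos.2 h)]; ring
    · rw [min_eq_right h, abs_of_nonneg (sub_nonneg.2 h)]; ring
  rw [sum_div, ← sum_add_distrib, sum_congr rfl fun p _ => hmin p, ← sum_div, sum_add_distrib]
  linarith [min_le_left (∑ p ∈ s, u p) (∑ p ∈ s, v p),
    min_le_right (∑ p ∈ s, u p) (∑ p ∈ s, v p)]

theorem exists_isPartialMatching_sum_le_sum_fiberwise {P K : Type*} [DecidableEq P] [Field K]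
    [LinearOrder K] [IsStrictOrderedRing K] {A : Finset α} {B : Finset β} {s : Finset P}
    {f : α → P} {g : β → P} {M : P → Finset (α × β)} {w : α → β → K} {D : K}
    (hf : Set.MapsTo f A s) (hg : Set.MapsTo g B s) (hD : 0 ≤ D)
    (hw : ∀ i ∈ A, ∀ j ∈ B, w i j ≤ D)
    (hM : ∀ p ∈ s, IsPartialMatching {i ∈ A | f i = p} {j ∈ B | g j = p} (M p))
    (hcard : ∀ p ∈ s, #(M p) = min #{i ∈ A | f i = p} #{j ∈ B | g j = p}) :
    ∃ N, IsPartialMatching A B N ∧ #N = min #A #B ∧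
      ∑ e ∈ N, w e.1 e.2 ≤ ∑ p ∈ s, ∑ e ∈ M p, w e.1 e.2 +
        D / 2 * ∑ p ∈ s, |(#{i ∈ A | f i = p} : K) - #{j ∈ B | g j = p}| := by
  classical
  have hdisj := IsPartialMatching.pairwiseDisjoint_of_fiberwise hM
  obtain ⟨N, hN, hNcard, hle⟩ :=
    (IsPartialMatching.biUnion_of_fiberwise hM).exists_card_eq_min_sum_le hw
  refine ⟨N, hN, hNcard, hle.trans ?_⟩
  have hnew : ((min #A #B : ℕ) - #(s.biUnion M) : K) ≤
      (∑ p ∈ s, |(#{i ∈ A | f i = p} : K) - #{j ∈ B | g j = p}|) / 2 := by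
    rw [card_biUnion hdisj, sum_congr rfl hcard, card_eq_sum_card_fiberwise hf,
      card_eq_sum_card_fiberwise hg, sub_le_iff_le_add']
    push_cast
    exact min_sum_le_sum_min_add_half_sum_abs_sub s _ _
  rw [sum_biUnion hdisj, div_mul_comm]
  gcongr

theorem exists_embedding_sum_eq_iff {R : Type*} [AddCommMonoid R] {A : Finset α} {B : Finset β}
    {n : ℕ} {w : α → β → R} {r : R} :
    (∃ (σ : Fin n ↪ α) (τ : Fin n ↪ β),
      (∀ i, σ i ∈ A) ∧ (∀ i, τ i ∈ B) ∧ r = ∑ i, w (σ i) (τ i)) ↔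
    ∃ M, IsPartialMatching A B M ∧ #M = n ∧ r = ∑ e ∈ M, w e.1 e.2 := by
  constructor
  · rintro ⟨σ, τ, hσ, hτ, rfl⟩
    let pair : Fin n ↪ α × β := ⟨fun i => (σ i, τ i), fun _ _ h => σ.injective (Prod.ext_iff.1 h).1⟩
    refine ⟨univ.map pair, ⟨?_, ?_, ?_, ?_⟩, by simp, (sum_map univ pair fun e => w e.1 e.2).symm⟩
    · exact forall_mem_map.2 fun i _ => hσ i
    · exact forall_mem_map.2 fun i _ => hτ i
    · rw [coe_map]
      rintro _ ⟨i, -, rfl⟩ _ ⟨j, -, rfl⟩ h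
      rw [σ.injective h]
    · rw [coe_map]
      rintro _ ⟨i, -, rfl⟩ _ ⟨j, -, rfl⟩ h
      rw [τ.injective h]
  · rintro ⟨M, hM, hcard, rfl⟩
    let pair : Fin n ≃ M := (M.equivFinOfCardEq hcard).symm
    refine ⟨⟨_, hM.injOn_fst.injective.comp pair.injective⟩,
      ⟨_, hM.injOn_snd.injective.comp pair.injective⟩, fun i => hM.fst_mem _ (pair i).2,
      fun i => hM.snd_mem _ (pair i).2, ?_⟩
    rw [← sum_coe_sort M]
    exact (pair.sum_comp fun e : M => w e.1.1 e.1.2).symm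

end PartialMatching

section LMBMon

open Finset

variable {d N₁ N₂ : ℕ} (X : Fin N₁ → EuclideanSpace ℝ (Fin d))
  (Y : Fin N₂ → EuclideanSpace ℝ (Fin d)) (A : Finset (Fin N₁)) (B : Finset (Fin N₂))

theorem isLeast_LMBMon :
    IsLeast {r | ∃ M, IsPartialMatching A B M ∧ #M = min #A #B ∧
      r = ∑ e ∈ M, dist (X e.1) (Y e.2)} (LMBMon X Y A B) := by
  have hfin : {r | ∃ M, IsPartialMatching A B M ∧ #M = min #A #B ∧
      r = ∑ e ∈ M, dist (X e.1) (Y e.2)}.Finite :=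
    (Set.finite_range fun M : Finset (Fin N₁ × Fin N₂) => ∑ e ∈ M, dist (X e.1) (Y e.2)).subset
      fun _ ⟨M, _, _, hr⟩ => ⟨M, hr.symm⟩
  obtain ⟨M, -, hM, hcard⟩ :=
    (IsPartialMatching.empty A B).exists_superset_card_eq (Nat.zero_le _) le_rfl
  simp only [LMBMon, exists_embedding_sum_eq_iff (w := fun i j => dist (X i) (Y j))]
  exact ⟨Set.Nonempty.csInf_mem ⟨_, M, hM, hcard, rfl⟩ hfin, fun _ => csInf_le hfin.bddBelow⟩

variable {X Y A B}

theorem LMBMon_le_sum_LMBMon_fiberwise {P : Type*} [DecidableEq P] {s : Finset P}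
    {f : Fin N₁ → P} {g : Fin N₂ → P} {D : ℝ}
    (hf : Set.MapsTo f A s) (hg : Set.MapsTo g B s) (hD : 0 ≤ D)
    (hdist : ∀ i ∈ A, ∀ j ∈ B, dist (X i) (Y j) ≤ D) :
    LMBMon X Y A B ≤ ∑ p ∈ s, LMBMon X Y {i ∈ A | f i = p} {j ∈ B | g j = p} +
      D / 2 * ∑ p ∈ s, |(#{i ∈ A | f i = p} : ℝ) - #{j ∈ B | g j = p}| := by
  choose M hM hcard hlength using fun p =>
    (isLeast_LMBMon X Y {i ∈ A | f i = p} {j ∈ B | g j = p}).1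
  obtain ⟨N, hN, hNcard, hle⟩ := exists_isPartialMatching_sum_le_sum_fiberwise hf hg hD hdist
    (fun p _ => hM p) fun p _ => hcard p
  simp only [hlength]
  exact ((isLeast_LMBMon X Y A B).2 ⟨N, hN, hNcard, rfl⟩).trans hle

end LMBMon

theorem dist_le_mul_sqrt_card_of_forall_dist_le {ι : Type*} [Fintype ι] {E : ι → Type*}
    [∀ i, SeminormedAddCommGroup (E i)] {x y : PiLp 2 E} {a : ℝ} (ha : 0 ≤ a)
    (hxy : ∀ i, dist (x i) (y i) ≤ a) : dist x y ≤ a * √(Fintype.card ι) := by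
  calc dist x y = √(∑ i, dist (x i) (y i) ^ 2) := PiLp.dist_eq_of_L2 x y
    _ ≤ √(∑ _i : ι, a ^ 2) := by gcongr with i; exact hxy i
    _ = a * √(Fintype.card ι) := by simp [mul_comm, ha]

/-- The label of the orthant with apex `m` that contains `x`; if `m` is the centre of a cube, it
names the subcube of half the edge length containing `x`. Ties `x i = m i` go to `true`, so that
each point has exactly one label. -/
def orthantLabel {ι R : Type*} [LinearOrder R] (m x : ι → R) : ι → Bool :=
  fun i => decide (m i ≤ x i)

theorem forall_ite_mem_Icc_Ico_iff_orthantLabel_eq {ι R : Type*} [LinearOrder R]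
    {l m u x : ι → R} (hx : ∀ i, x i ∈ Set.Icc (l i) (u i)) (p : ι → Bool) :
    (∀ i, if p i then x i ∈ Set.Icc (m i) (u i) else x i ∈ Set.Ico (l i) (m i)) ↔
      orthantLabel m x = p := by
  rw [funext_iff]
  refine forall_congr' fun i => ?_
  cases h : p i
  · simp [orthantLabel, (hx i).1]
  · simp [orthantLabel, (hx i).2]

open scoped Classical in
/-- Subadditivity of the minimum bipartite matching length under division of a cube `Q`
(with lower corner `c` and edge length `a`) into `2^d` congruent subcubes of edge `a/2`.
The subcube with label `p : Fin d → Bool` consists of those points of `Q` lying, in each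
coordinate `i`, in the upper half if `p i` and in the (half-open) lower half otherwise. -/
theorem MBM_subadditive_halving
    (d N₁ N₂ : ℕ) (hd : 1 ≤ d) (a : ℝ) (ha : 0 < a) (c : Fin d → ℝ)
    (X : Fin N₁ → EuclideanSpace ℝ (Fin d)) (Y : Fin N₂ → EuclideanSpace ℝ (Fin d))
    (hX : ∀ j, ∀ i, X j i ∈ Set.Icc (c i) (c i + a))
    (hY : ∀ j, ∀ i, Y j i ∈ Set.Icc (c i) (c i + a)) :
    LMBM X Y ≤
      (∑ p : Fin d → Bool,
        LMBMon X Y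
          (Finset.univ.filter fun j => ∀ i, if p i
            then X j i ∈ Set.Icc (c i + a / 2) (c i + a)
            else X j i ∈ Set.Ico (c i) (c i + a / 2))
          (Finset.univ.filter fun j => ∀ i, if p i
            then Y j i ∈ Set.Icc (c i + a / 2) (c i + a)
            else Y j i ∈ Set.Ico (c i) (c i + a / 2))) +
      a * Real.sqrt d / 2 *
        ∑ p : Fin d → Bool,
          |((Finset.univ.filter fun j => ∀ i, if p i
              then X j i ∈ Set.Icc (c i + a / 2) (c i + a)
              else X j i ∈ Set.Ico (c i) (c i + a / 2)).card : ℝ) -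
           ((Finset.univ.filter fun j => ∀ i, if p i
              then Y j i ∈ Set.Icc (c i + a / 2) (c i + a)
              else Y j i ∈ Set.Ico (c i) (c i + a / 2)).card : ℝ)| := by
  let center : Fin d → ℝ := fun i => c i + a / 2
  have hXcell (p : Fin d → Bool) (j : Fin N₁) :=
    forall_ite_mem_Icc_Ico_iff_orthantLabel_eq (m := center) (hX j) p
  have hYcell (p : Fin d → Bool) (j : Fin N₂) :=
    forall_ite_mem_Icc_Ico_iff_orthantLabel_eq (m := center) (hY j) p
  have hcoord (i : Fin N₁) (j : Fin N₂) (k : Fin d) : dist (X i k) (Y j k) ≤ a := by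
    simpa using Real.dist_le_of_mem_Icc (hX i k) (hY j k)
  have hdist (i : Fin N₁) (j : Fin N₂) : dist (X i) (Y j) ≤ a * √d := by
    simpa using dist_le_mul_sqrt_card_of_forall_dist_le ha.le (hcoord i j)
  simp only [center] at hXcell hYcell
  simp only [hXcell, hYcell]
  exact LMBMon_le_sum_LMBMon_fiberwise (by simp) (by simp) (by positivity)
    fun i _ j _ => hdist i j
end
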